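/- Let n ≥ 1, let b ≥ 1 be an integer, and let α ∈ (1/2, 1] satisfy 2α − 1 < n and nb > (2α−1)(b+1). Let p(·) ∈ P^log(ℝ^n) with p⁻ > b+1 and (2α−1)·p⁺ < n(b+1). Then there exists C > 0 such that for every measurable 𝓕 : (0,∞)×ℝ^n → ℝ: N_{p(·), nb/(2α−1)}( (t,x) ↦ Σ_{j=1}^n ∫_0^t (∂_j 𝔤_{t−s}^α ∗ 𝓕(s,·))(x) ds ) ≤ C · N_{p(·)/(b+1), nb/((b+1)(2α−1))}(𝓕). -/

import Mathlib

open MeasureTheory Set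
open scoped ENNReal FourierTransform

noncomputable section

/-- Euclidean space `ℝ^n`. -/
abbrev Rn (n : ℕ) := EuclideanSpace ℝ (Fin n)

/-- Luxemburg norm of an `ℝ≥0∞`-valued function for a variable exponent `p`. -/
def luxNorm {Ω : Type*} [MeasurableSpace Ω] (μ : Measure Ω) (p : Ω → ℝ) (f : Ω → ℝ≥0∞) : ℝ≥0∞ :=
  sInf {lam : ℝ≥0∞ | 0 < lam ∧ ∫⁻ x, (f x / lam) ^ (p x) ∂μ ≤ 1}

/-- Luxemburg norm `‖f‖_{L^{p(·)}}` of a real-valued function. -/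
def luxNormR {Ω : Type*} [MeasurableSpace Ω] (μ : Measure Ω) (p : Ω → ℝ) (f : Ω → ℝ) : ℝ≥0∞ :=
  luxNorm μ p (fun x => ENNReal.ofReal |f x|)

/-- `p(·) ∈ P^log(Ω)`: measurable, with values in `[1,∞)` on `Ω`, locally log-Hölder
continuous on `Ω`, and satisfying the log-Hölder decay condition on `Ω`. -/
def IsPLog {E : Type*} [NormedAddCommGroup E] [MeasurableSpace E] (Ω : Set E) (p : E → ℝ) : Prop :=
  Measurable p ∧ (∀ x ∈ Ω, 1 ≤ p x) ∧
  ∃ C₁ > (0:ℝ), ∃ C₂ > (0:ℝ), ∃ pinf : ℝ,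
    (∀ x ∈ Ω, ∀ y ∈ Ω, x ≠ y →
      |1 / p x - 1 / p y| ≤ C₁ / Real.log (Real.exp 1 + 1 / ‖x - y‖)) ∧
    (∀ x ∈ Ω, |1 / p x - 1 / pinf| ≤ C₂ / Real.log (Real.exp 1 + ‖x‖))

/-- The fractional heat kernel `𝔤_t^α` on `ℝ^n`: the inverse Fourier transform of
`ξ ↦ exp (-t‖ξ‖^{2α})` (it is real-valued; we take the real part). -/
def gKer (n : ℕ) (α t : ℝ) (x : Rn n) : ℝ :=
  (𝓕⁻ (fun ξ : Rn n => (Real.exp (-t * ‖ξ‖ ^ (2 * α)) : ℂ)) x).re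

/-- Convolution on `ℝ^n`. -/
def conv (n : ℕ) (g f : Rn n → ℝ) (x : Rn n) : ℝ := ∫ y, g (x - y) * f y

/-- The partial derivative `∂_j 𝔤_t^α`. -/
def dKer (n : ℕ) (α t : ℝ) (j : Fin n) (z : Rn n) : ℝ :=
  fderiv ℝ (gKer n α t) z (EuclideanSpace.single j 1)

/-- `x ↦ ess sup_{t>0} |u(t,x)|`, as an `ℝ≥0∞`-valued function. -/
def timeSup (n : ℕ) (u : ℝ → Rn n → ℝ) (x : Rn n) : ℝ≥0∞ :=
  essSup (fun t => ENNReal.ofReal |u t x|) (volume.restrict (Ioi (0:ℝ)))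

/-- Mixed norm `‖f‖_{𝓛^{p(·)}_r} = max {‖f‖_{L^{p(·)}}, ‖f‖_{L^r}}`. -/
def mixedNorm (n : ℕ) (p : Rn n → ℝ) (r : ℝ) (f : Rn n → ℝ) : ℝ≥0∞ :=
  max (luxNormR volume p f) (luxNormR volume (fun _ => r) f)

/-- `N_{p(·),r}(u) = ‖x ↦ ess sup_{t>0}|u(t,x)|‖_{𝓛^{p(·)}_r}`. -/
def mixedN (n : ℕ) (p : Rn n → ℝ) (r : ℝ) (u : ℝ → Rn n → ℝ) : ℝ≥0∞ :=
  max (luxNorm volume p (timeSup n u)) (luxNorm volume (fun _ => r) (timeSup n u))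

/- By a Pareto approximation of the positive stable laws, `exp (-t‖ξ‖ ^ (2α))` is a pointwise limit
of products of Laplace transforms in `‖ξ‖²` of probability measures, that is, of mixtures of
Gaussians. For a Gaussian the derivative of the kernel is at most `C ‖w‖ ^ (-(n + 1))`, uniformly
in the variance, and this bound survives mixtures and limits; together with the bound by scaling,
`|∂_j 𝔤_τ^α (w)| ≤ C min (‖w‖ ^ (-(n + 1))) (τ ^ (-(n + 1) / (2α)))`. Integrating in `τ` bounds
the Duhamel term by the Riesz potential of order `β = 2α - 1` of the time supremum `f` of `𝓕`.
Hedberg's inequality bounds that potential by `C (M f) ^ (1 - β q / n)` when `‖f‖_{L^q} ≤ 1`,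
`M` being the Hardy–Littlewood maximal function. At `q = n b / ((b + 1) β)` the exponent is
`1 / (b + 1)`, so the theorem reduces to the boundedness of `M` on `L^q` and on
`L^{p(·) / (b + 1)}`, which for the latter is where log-Hölder continuity and `p⁻ > b + 1` enter. -/

section DerivKernel

open Filter Topology ProbabilityTheory Module
open scoped RealInnerProductSpace Real Nat

lemma abs_mgf_id_neg_le_one {ν : Measure ℝ} [IsProbabilityMeasure ν] (hν : ∀ᵐ u ∂ν, 0 ≤ u) {s : ℝ}
    (hs : 0 ≤ s) : |mgf id ν (-s)| ≤ 1 := by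
  have hexp : ∀ᵐ u ∂ν, ‖Real.exp (-s * u)‖ ≤ 1 := by
    filter_upwards [hν] with u hu
    rw [Real.norm_eq_abs, Real.abs_exp, Real.exp_le_one_iff]
    exact mul_nonpos_of_nonpos_of_nonneg (neg_nonpos.2 hs) hu
  simpa [mgf] using norm_integral_le_of_norm_le_const hexp

variable {V : Type*} [NormedAddCommGroup V] [InnerProductSpace ℝ V]

lemma norm_exp_mul_inner_mul_le (m : V → ℝ) (v w ξ : V) :
    ‖Complex.exp (↑(2 * π * ⟪ξ, w⟫) * Complex.I) * ((⟪ξ, v⟫ * m ξ : ℝ) : ℂ)‖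
      ≤ ‖v‖ * (‖ξ‖ * |m ξ|) := by
  rw [norm_mul, Complex.norm_exp_ofReal_mul_I, one_mul, Complex.norm_real, norm_mul,
    ← mul_assoc, mul_comm ‖v‖]
  exact mul_le_mul_of_nonneg_right (norm_inner_le_norm ξ v) (norm_nonneg _)

variable [FiniteDimensional ℝ V] [MeasurableSpace V] [BorelSpace V]

/-- The inverse Fourier transform of `ξ ↦ ⟪ξ, v⟫ m(ξ)`. Up to the factor `2πi` it is the derivative
in direction `v` of the convolution kernel with Fourier multiplier `m`. -/
def derivKernel (m : V → ℝ) (v w : V) : ℂ := 𝓕⁻ (fun ξ ↦ ((⟪ξ, v⟫ * m ξ : ℝ) : ℂ)) w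

lemma derivKernel_eq_integral (m : V → ℝ) (v w : V) :
    derivKernel m v w
      = ∫ ξ, Complex.exp (↑(2 * π * ⟪ξ, w⟫) * Complex.I) * ((⟪ξ, v⟫ * m ξ : ℝ) : ℂ) :=
  Real.fourierInv_eq' _ w

lemma hasFDerivAt_fourierInv {f : V → ℂ} (hf : Integrable f)
    (hf' : Integrable fun ξ ↦ ‖ξ‖ * ‖f ξ‖) (w : V) :
    HasFDerivAt (𝓕⁻ f) ((𝓕⁻ (VectorFourier.fourierSMulRight (innerSL ℝ) f) w).comp
      (-ContinuousLinearMap.id ℝ V)) w := by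
  rw [Real.fourierInv_eq_fourier_neg]
  exact ((Real.hasFDerivAt_fourier hf hf' (-w)).comp w (hasFDerivAt_id w).neg).congr_of_eventuallyEq
    (.of_forall fun x ↦ Real.fourierInv_eq_fourier_neg f x)

lemma fderiv_fourierInv_apply {f : V → ℂ} (hf : Integrable f)
    (hf' : Integrable fun ξ ↦ ‖ξ‖ * ‖f ξ‖) (w v : V) :
    fderiv ℝ (𝓕⁻ f) w v = 2 * π * Complex.I * 𝓕⁻ (fun ξ ↦ (⟪ξ, v⟫ : ℂ) * f ξ) w := by
  have hexp : AEStronglyMeasurable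
      (fun ξ : V ↦ Complex.exp (↑(2 * π * ⟪ξ, w⟫) * Complex.I)) volume :=
    Continuous.aestronglyMeasurable (by fun_prop)
  have hright : AEStronglyMeasurable (VectorFourier.fourierSMulRight (innerSL ℝ) f) volume :=
    hf.aestronglyMeasurable.fourierSMulRight
  have hint : Integrable fun ξ : V ↦ Complex.exp (↑(2 * π * ⟪ξ, w⟫) * Complex.I)
      • VectorFourier.fourierSMulRight (innerSL ℝ) f ξ := by
    refine (hf'.const_mul (2 * π * ‖innerSL ℝ (E := V)‖)).mono' (hexp.smul hright)
      (.of_forall fun ξ ↦ ?_)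
    rw [norm_smul, Complex.norm_exp_ofReal_mul_I, one_mul]
    exact (VectorFourier.norm_fourierSMulRight_le _ f ξ).trans_eq (by ring)
  rw [(hasFDerivAt_fourierInv hf hf' w).fderiv, ContinuousLinearMap.comp_apply,
    Real.fourierInv_eq', Real.fourierInv_eq', ContinuousLinearMap.integral_apply hint,
    ← integral_const_mul]
  refine integral_congr_ae (.of_forall fun ξ ↦ ?_)
  simp only [neg_apply, ContinuousLinearMap.id_apply, smul_apply, map_neg,
    VectorFourier.fourierSMulRight_apply, innerSL_apply_apply ℝ, smul_eq_mul, Complex.real_smul]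
  ring

lemma fderiv_re_fourierInv_apply {m : V → ℝ} (hm : Integrable m)
    (hm' : Integrable fun ξ ↦ ‖ξ‖ * |m ξ|) (w v : V) :
    fderiv ℝ (fun x ↦ (𝓕⁻ (fun ξ ↦ (m ξ : ℂ)) x).re) w v
      = (2 * π * Complex.I * derivKernel m v w).re := by
  have hf : Integrable fun ξ ↦ (m ξ : ℂ) := hm.ofReal
  have hf' : Integrable fun ξ ↦ ‖ξ‖ * ‖(m ξ : ℂ)‖ := by simpa using hm'
  have hderiv := hasFDerivAt_fourierInv hf hf' w
  have hre : HasFDerivAt (fun x ↦ (𝓕⁻ (fun ξ ↦ (m ξ : ℂ)) x).re) _ w :=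
    Complex.reCLM.hasFDerivAt.comp w hderiv
  rw [hre.fderiv, ContinuousLinearMap.comp_apply, ← hderiv.fderiv, Complex.reCLM_apply,
    fderiv_fourierInv_apply hf hf', derivKernel]
  push_cast
  rfl

lemma norm_derivKernel_le {m : V → ℝ} (hm : Integrable fun ξ ↦ ‖ξ‖ * |m ξ|) (v w : V) :
    ‖derivKernel m v w‖ ≤ ‖v‖ * ∫ ξ, ‖ξ‖ * |m ξ| := by
  rw [derivKernel_eq_integral, ← integral_const_mul]
  exact norm_integral_le_of_norm_le (hm.const_mul _)
    (.of_forall (norm_exp_mul_inner_mul_le m v w))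

lemma tendsto_derivKernel {f : ℕ → V → ℝ} {m b : V → ℝ} (hf : ∀ k, Measurable (f k))
    (hb : Integrable fun ξ ↦ ‖ξ‖ * b ξ) (hfb : ∀ k ξ, |f k ξ| ≤ b ξ)
    (hlim : ∀ ξ, Tendsto (fun k ↦ f k ξ) atTop (𝓝 (m ξ))) (v w : V) :
    Tendsto (fun k ↦ derivKernel (f k) v w) atTop (𝓝 (derivKernel m v w)) := by
  simp only [derivKernel_eq_integral]
  refine tendsto_integral_of_dominated_convergence (fun ξ ↦ ‖v‖ * (‖ξ‖ * b ξ)) (fun k ↦ ?_)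
    (hb.const_mul _) (fun k ↦ .of_forall fun ξ ↦ ?_) (.of_forall fun ξ ↦ ?_)
  · have := hf k
    fun_prop
  · exact (norm_exp_mul_inner_mul_le (f k) v w ξ).trans (by gcongr; exact hfb k ξ)
  · exact ((Complex.continuous_ofReal.tendsto _).comp ((hlim ξ).const_mul _)).const_mul _

lemma derivKernel_integral {Ω : Type*} [MeasurableSpace Ω] {ν : Measure Ω} [SFinite ν]
    {m : Ω → V → ℝ} (hm : Measurable (Function.uncurry m))
    (hint : Integrable (fun z : V × Ω ↦ ‖z.1‖ * |m z.2 z.1|) (volume.prod ν)) (v w : V) :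
    derivKernel (fun ξ ↦ ∫ ω, m ω ξ ∂ν) v w = ∫ ω, derivKernel (m ω) v w ∂ν := by
  simp only [derivKernel_eq_integral]
  rw [← integral_integral_swap]
  · simp only [integral_const_mul, integral_complex_ofReal]
  · refine (hint.const_mul ‖v‖).mono' (Measurable.aestronglyMeasurable ?_)
      (.of_forall fun z ↦ norm_exp_mul_inner_mul_le (m z.2) v w z.1)
    have : Measurable fun z : V × Ω ↦ m z.2 z.1 := hm.comp measurable_swap
    fun_prop

lemma integrable_norm_rpow_mul_exp_neg_mul_rpow [Nontrivial V] {k t s : ℝ} (hk : 0 ≤ k)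
    (ht : 0 < t) (hs : 0 < s) :
    Integrable fun ξ : V ↦ ‖ξ‖ ^ k * Real.exp (-t * ‖ξ‖ ^ s) := by
  rw [integrable_fun_norm_addHaar volume (f := fun r ↦ r ^ k * Real.exp (-t * r ^ s))]
  have h := integrableOn_rpow_mul_exp_neg_mul_rpow (s := ((finrank ℝ V - 1 : ℕ) : ℝ) + k)
    (neg_one_lt_zero.trans_le (by positivity)) hs ht
  refine h.congr_fun (fun r hr ↦ ?_) measurableSet_Ioi
  simp only [Real.rpow_add (mem_Ioi.1 hr), Real.rpow_natCast, smul_eq_mul, mul_assoc]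

lemma integrable_exp_neg_mul_norm_rpow [Nontrivial V] {t s : ℝ} (ht : 0 < t) (hs : 0 < s) :
    Integrable fun ξ : V ↦ Real.exp (-t * ‖ξ‖ ^ s) := by
  simpa using integrable_norm_rpow_mul_exp_neg_mul_rpow (V := V) le_rfl ht hs

lemma integrable_norm_mul_exp_neg_mul_norm_rpow [Nontrivial V] {t s : ℝ} (ht : 0 < t)
    (hs : 0 < s) : Integrable fun ξ : V ↦ ‖ξ‖ * Real.exp (-t * ‖ξ‖ ^ s) := by
  simpa using integrable_norm_rpow_mul_exp_neg_mul_rpow (V := V) zero_le_one ht hs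

lemma integrable_norm_mul_gaussian [Nontrivial V] {δ : ℝ} (hδ : 0 < δ) :
    Integrable fun ξ : V ↦ ‖ξ‖ * Real.exp (-δ * ‖ξ‖ ^ 2) := by
  simpa using integrable_norm_mul_exp_neg_mul_norm_rpow (V := V) hδ two_pos

lemma integral_norm_mul_exp_neg_mul_norm_rpow [Nontrivial V] {t s : ℝ} (ht : 0 < t) (hs : 0 < s) :
    ∫ ξ : V, ‖ξ‖ * Real.exp (-t * ‖ξ‖ ^ s)
      = (∫ ξ : V, ‖ξ‖ * Real.exp (-‖ξ‖ ^ s)) * t ^ (-((finrank ℝ V + 1) / s)) := by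
  have hradial (t : ℝ) (ht : 0 < t) : ∫ y in Ioi (0 : ℝ),
      y ^ (finrank ℝ V - 1) • (y * Real.exp (-t * y ^ s))
        = t ^ (-((finrank ℝ V + 1) / s)) * (1 / s) * Real.Gamma ((finrank ℝ V + 1) / s) := by
    rw [← neg_div, ← integral_rpow_mul_exp_neg_mul_rpow hs
      (neg_one_lt_zero.trans_le (Nat.cast_nonneg _)) ht]
    refine setIntegral_congr_fun measurableSet_Ioi fun y _ ↦ ?_
    rw [smul_eq_mul, ← mul_assoc, ← pow_succ, Nat.sub_add_cancel finrank_pos, Real.rpow_natCast]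
  have h₁ := hradial 1 one_pos
  simp only [neg_mul, one_mul] at h₁
  rw [integral_fun_norm_addHaar volume fun r ↦ r * Real.exp (-t * r ^ s),
    integral_fun_norm_addHaar volume fun r ↦ r * Real.exp (-r ^ s), hradial t ht, h₁]
  simp only [nsmul_eq_mul, smul_eq_mul, Real.one_rpow]
  ring

lemma fourierInv_gaussian {δ : ℝ} (hδ : 0 < δ) (x : V) :
    𝓕⁻ (fun ξ : V ↦ (Real.exp (-δ * ‖ξ‖ ^ 2) : ℂ)) x
      = ((√(π / δ) ^ finrank ℝ V * Real.exp (-(π ^ 2 / δ) * ‖x‖ ^ 2) : ℝ) : ℂ) := by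
  have hcoeff : (π / δ : ℂ) ^ ((finrank ℝ V : ℂ) / 2)
      = ((√(π / δ) ^ finrank ℝ V : ℝ) : ℂ) := by
    rw [← Real.rpow_natCast, Real.sqrt_eq_rpow, ← Real.rpow_mul (by positivity),
      Complex.ofReal_cpow (by positivity)]
    push_cast
    ring_nf
  have h := fourier_gaussian_innerProductSpace (V := V) (b := (δ : ℂ)) (by simpa using hδ) (-x)
  rw [hcoeff, norm_neg] at h
  rw [Real.fourierInv_eq_fourier_neg]
  push_cast at h ⊢
  rw [h]
  ring_nf

lemma derivKernel_gaussian [Nontrivial V] {δ : ℝ} (hδ : 0 < δ) (v w : V) :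
    derivKernel (fun ξ ↦ Real.exp (-δ * ‖ξ‖ ^ 2)) v w
      = Complex.I * ((√(π / δ) ^ (finrank ℝ V + 2) * ⟪w, v⟫
        * Real.exp (-(π * (√(π / δ) * ‖w‖) ^ 2)) : ℝ) : ℂ) := by
  set σ := √(π / δ)
  have hσ : π ^ 2 / δ = π * σ ^ 2 := by rw [Real.sq_sqrt (by positivity)]; ring
  have hint : Integrable fun ξ : V ↦ (Real.exp (-δ * ‖ξ‖ ^ 2) : ℂ) := by
    simpa using (integrable_exp_neg_mul_norm_rpow (V := V) hδ two_pos).ofReal (𝕜 := ℂ)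
  have hderiv : HasFDerivAt (fun x : V ↦ ((σ ^ finrank ℝ V *
      Real.exp (-(π * σ ^ 2) * ‖x‖ ^ 2) : ℝ) : ℂ))
      (Complex.ofRealCLM.comp (σ ^ finrank ℝ V • Real.exp (-(π * σ ^ 2) * ‖w‖ ^ 2) •
        (-(π * σ ^ 2)) • (2 • innerSL ℝ w))) w :=
    Complex.ofRealCLM.hasFDerivAt.comp w <|
      (((hasStrictFDerivAt_norm_sq w).hasFDerivAt.const_mul _).exp).const_mul _
  have h := fderiv_fourierInv_apply hint
    (by simpa only [Complex.norm_real, Real.norm_eq_abs, Real.abs_exp] using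
      integrable_norm_mul_gaussian hδ) w v
  rw [funext (fourierInv_gaussian (V := V) hδ), hσ, hderiv.fderiv] at h
  refine mul_left_cancel₀ Complex.two_pi_I_ne_zero ?_
  trans 2 * π * Complex.I * 𝓕⁻ (fun ξ : V ↦ (⟪ξ, v⟫ : ℂ) * (Real.exp (-δ * ‖ξ‖ ^ 2) : ℂ)) w
  · simp only [derivKernel, Complex.ofReal_mul]
  rw [← h]
  simp only [ContinuousLinearMap.comp_apply, smul_apply, innerSL_apply_apply ℝ,
    Complex.ofRealCLM_apply, smul_eq_mul, nsmul_eq_mul]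
  rw [show -(π * (σ * ‖w‖) ^ 2) = -(π * σ ^ 2) * ‖w‖ ^ 2 by ring]
  push_cast
  linear_combination (-2 * π * σ ^ (finrank ℝ V + 2) * ⟪w, v⟫
    * Complex.exp (-(π * σ ^ 2) * ‖w‖ ^ 2)) * Complex.I_sq

lemma norm_pow_mul_norm_derivKernel_gaussian_le [Nontrivial V] {δ : ℝ} (hδ : 0 < δ) (v w : V) :
    ‖w‖ ^ (finrank ℝ V + 1) * ‖derivKernel (fun ξ ↦ Real.exp (-δ * ‖ξ‖ ^ 2)) v w‖
      ≤ Real.exp 1 * (finrank ℝ V + 2)! * ‖v‖ := by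
  set N := finrank ℝ V
  set z := √(π / δ) * ‖w‖ with hz
  have hz0 : 0 ≤ z := by positivity
  have hzexp : z ^ (N + 2) ≤ (N + 2)! * Real.exp (π * z ^ 2 + 1) := by
    rw [← div_le_iff₀' (by positivity)]
    refine (Real.pow_div_factorial_le_exp z hz0 _).trans (Real.exp_le_exp.2 ?_)
    nlinarith [Real.pi_gt_three, sq_nonneg (z - 1)]
  have hinner : |⟪w, v⟫| ≤ ‖w‖ * ‖v‖ := abs_real_inner_le_norm w v
  rw [derivKernel_gaussian hδ, norm_mul, Complex.norm_I, one_mul, Complex.norm_real, norm_mul,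
    norm_mul, norm_pow, Real.norm_eq_abs, Real.norm_eq_abs, Real.norm_eq_abs, Real.abs_exp,
    abs_of_nonneg (Real.sqrt_nonneg _)]
  calc ‖w‖ ^ (N + 1) * (√(π / δ) ^ (N + 2) * |⟪w, v⟫| * Real.exp (-(π * z ^ 2)))
      ≤ ‖w‖ ^ (N + 1) * (√(π / δ) ^ (N + 2) * (‖w‖ * ‖v‖) * Real.exp (-(π * z ^ 2))) := by gcongr
    _ = z ^ (N + 2) * Real.exp (-(π * z ^ 2)) * ‖v‖ := by rw [hz]; ring
    _ ≤ (N + 2)! * Real.exp (π * z ^ 2 + 1) * Real.exp (-(π * z ^ 2)) * ‖v‖ := by gcongr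
    _ = Real.exp 1 * (N + 2)! * ‖v‖ := by
      rw [mul_assoc ((N + 2)! : ℝ), ← Real.exp_add, add_neg_cancel_comm]
      ring

lemma derivKernel_gaussian_mul_mgf [Nontrivial V] {g : V → ℝ} (hg : Measurable g)
    (hg1 : ∀ ξ, |g ξ| ≤ 1) {ν : Measure ℝ} [IsProbabilityMeasure ν] (hν : ∀ᵐ u ∂ν, 0 ≤ u) {δ : ℝ}
    (hδ : 0 < δ) (v w : V) :
    derivKernel (fun ξ ↦ Real.exp (-δ * ‖ξ‖ ^ 2) * (g ξ * mgf id ν (-‖ξ‖ ^ 2))) v w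
      = ∫ u, derivKernel (fun ξ ↦ Real.exp (-(δ + u) * ‖ξ‖ ^ 2) * g ξ) v w ∂ν := by
  let m (u : ℝ) (ξ : V) : ℝ := Real.exp (-(δ + u) * ‖ξ‖ ^ 2) * g ξ
  have hm : Measurable (Function.uncurry m) := by fun_prop
  have : Measurable fun z : V × ℝ ↦ m z.2 z.1 := hm.comp measurable_swap
  have hint : Integrable (fun z : V × ℝ ↦ ‖z.1‖ * |m z.2 z.1|) (volume.prod ν) := by
    refine (Integrable.comp_fst (integrable_norm_mul_gaussian hδ) ν).mono' (by fun_prop) ?_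
    filter_upwards [Measure.quasiMeasurePreserving_snd.ae hν] with z hz
    rw [norm_mul, norm_norm, Real.norm_eq_abs, abs_abs, abs_mul, Real.abs_exp]
    gcongr
    refine (mul_le_of_le_one_right (Real.exp_nonneg _) (hg1 _)).trans ?_
    gcongr
    linarith
  have hmix : (fun ξ ↦ Real.exp (-δ * ‖ξ‖ ^ 2) * (g ξ * mgf id ν (-‖ξ‖ ^ 2)))
      = fun ξ ↦ ∫ u, m u ξ ∂ν := by
    ext ξ
    rw [mgf, ← mul_assoc, ← integral_const_mul]
    refine integral_congr_ae (.of_forall fun u ↦ ?_)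
    simp only [m, id, neg_add, add_mul, Real.exp_add]
    rw [show -u * ‖ξ‖ ^ 2 = -‖ξ‖ ^ 2 * u by ring]
    ring
  rw [hmix, derivKernel_integral hm hint]

/-- Multipliers `g` bounded by `1` such that, for each of the Gaussian regularisations
`ξ ↦ exp (-δ‖ξ‖²) g ξ`, the directional derivatives of the convolution kernel are bounded by
`C ‖v‖ ‖w‖ ^ (-(d + 1))`, with `C` independent of `δ`. This class is closed under pointwise limits
and under multiplication by Laplace transforms in `‖ξ‖²` of probability measures. -/
structure HasDerivKernelBound (C : ℝ) (g : V → ℝ) : Prop where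
  measurable : Measurable g
  abs_le_one : ∀ ξ, |g ξ| ≤ 1
  bound : ∀ δ > 0, ∀ v w, ‖w‖ ^ (finrank ℝ V + 1)
    * ‖derivKernel (fun ξ ↦ Real.exp (-δ * ‖ξ‖ ^ 2) * g ξ) v w‖ ≤ C * ‖v‖

namespace HasDerivKernelBound

lemma one [Nontrivial V] :
    HasDerivKernelBound (Real.exp 1 * (finrank ℝ V + 2)!) (fun _ : V ↦ 1) where
  measurable := measurable_const
  abs_le_one _ := by simp
  bound δ hδ v w := by simpa using norm_pow_mul_norm_derivKernel_gaussian_le hδ v w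

lemma of_tendsto [Nontrivial V] {C : ℝ} {f : ℕ → V → ℝ} {g : V → ℝ}
    (hf : ∀ k, HasDerivKernelBound C (f k))
    (hlim : ∀ ξ, Tendsto (fun k ↦ f k ξ) atTop (𝓝 (g ξ))) : HasDerivKernelBound C g where
  measurable := measurable_of_tendsto_metrizable (fun k ↦ (hf k).measurable)
    (tendsto_pi_nhds.2 hlim)
  abs_le_one ξ := le_of_tendsto (hlim ξ).abs (.of_forall fun k ↦ (hf k).abs_le_one ξ)
  bound δ hδ v w := by
    have hkernel := tendsto_derivKernel (f := fun k ξ ↦ Real.exp (-δ * ‖ξ‖ ^ 2) * f k ξ)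
      (fun k ↦ have := (hf k).measurable; by fun_prop) (integrable_norm_mul_gaussian hδ)
      (fun k ξ ↦ by
        rw [abs_mul, Real.abs_exp]
        exact mul_le_of_le_one_right (Real.exp_nonneg _) ((hf k).abs_le_one ξ))
      (fun ξ ↦ (hlim ξ).const_mul _) v w
    exact le_of_tendsto (hkernel.norm.const_mul _) (.of_forall fun k ↦ (hf k).bound δ hδ v w)

lemma norm_pow_mul_norm_derivKernel_le {C : ℝ} {g : V → ℝ} (hg : HasDerivKernelBound C g)
    (hint : Integrable fun ξ ↦ ‖ξ‖ * |g ξ|) (v w : V) :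
    ‖w‖ ^ (finrank ℝ V + 1) * ‖derivKernel g v w‖ ≤ C * ‖v‖ := by
  have hδ (ξ : V) : Tendsto (fun k : ℕ ↦ Real.exp (-(1 / ((k : ℝ) + 1)) * ‖ξ‖ ^ 2) * g ξ) atTop
      (𝓝 (g ξ)) := by
    simpa using ((Real.continuous_exp.tendsto _).comp
      (tendsto_one_div_add_atTop_nhds_zero_nat.neg.mul_const (‖ξ‖ ^ 2))).mul_const (g ξ)
  have hkernel := tendsto_derivKernel
    (fun k ↦ have := hg.measurable; by fun_prop) hint (fun k ξ ↦ by
      rw [abs_mul, Real.abs_exp, neg_mul]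
      exact mul_le_of_le_one_left (abs_nonneg _) (Real.exp_le_one_iff.2
        (neg_nonpos.2 (by positivity)))) hδ v w
  exact le_of_tendsto (hkernel.norm.const_mul _)
    (.of_forall fun k ↦ hg.bound _ (by positivity) v w)

lemma mul_mgf [Nontrivial V] {C : ℝ} {g : V → ℝ} (hg : HasDerivKernelBound C g) {ν : Measure ℝ}
    [IsProbabilityMeasure ν] (hν : ∀ᵐ u ∂ν, 0 ≤ u) :
    HasDerivKernelBound C (fun ξ ↦ g ξ * mgf id ν (-‖ξ‖ ^ 2)) where
  measurable := by
    have : StronglyMeasurable fun ξ : V ↦ mgf id ν (-‖ξ‖ ^ 2) :=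
      StronglyMeasurable.integral_prod_right' (f := fun z : V × ℝ ↦ Real.exp (-‖z.1‖ ^ 2 * z.2))
        (by fun_prop : Measurable _).stronglyMeasurable
    exact hg.measurable.mul this.measurable
  abs_le_one ξ := by
    rw [abs_mul]
    exact mul_le_one₀ (hg.abs_le_one ξ) (abs_nonneg _)
      (abs_mgf_id_neg_le_one hν (by positivity))
  bound δ hδ v w := by
    rw [derivKernel_gaussian_mul_mgf hg.measurable hg.abs_le_one hν hδ]
    calc _ = ‖∫ u, ‖w‖ ^ (finrank ℝ V + 1) •
          derivKernel (fun ξ ↦ Real.exp (-(δ + u) * ‖ξ‖ ^ 2) * g ξ) v w ∂ν‖ := by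
          rw [integral_smul, norm_smul, norm_pow, norm_norm]
      _ ≤ C * ‖v‖ * ν.real univ := norm_integral_le_of_norm_le_const <| by
          filter_upwards [hν] with u hu
          rw [norm_smul, norm_pow, norm_norm]
          exact hg.bound _ (by positivity) v w
      _ = C * ‖v‖ := by simp

end HasDerivKernelBound

end DerivKernel

section StableMultiplier

open Filter Topology ProbabilityTheory Module
open scoped RealInnerProductSpace Real Nat

/-- The integrand of the Lévy–Khintchine formula for the positive `a`-stable law: its integral over
`v > 0` is a constant multiple of `r ^ a`. -/
def levyIntegrand (a r v : ℝ) : ℝ := (1 - Real.exp (-(r * v))) * (a * v ^ (-(a + 1)))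

lemma measurable_levyIntegrand (a r : ℝ) : Measurable (levyIntegrand a r) := by
  unfold levyIntegrand
  fun_prop

lemma levyIntegrand_nonneg {a r v : ℝ} (ha : 0 ≤ a) (hr : 0 ≤ r) (hv : 0 ≤ v) :
    0 ≤ levyIntegrand a r v := by
  have : 0 ≤ 1 - Real.exp (-(r * v)) :=
    sub_nonneg.2 (Real.exp_le_one_iff.2 (neg_nonpos.2 (by positivity)))
  unfold levyIntegrand
  positivity

lemma levyIntegrand_le {a r v : ℝ} (ha : 0 ≤ a) (hv : 0 ≤ v) :
    levyIntegrand a r v ≤ a * v ^ (-(a + 1)) :=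
  mul_le_of_le_one_left (by positivity) (sub_le_self _ (Real.exp_nonneg _))

lemma levyIntegrand_le_mul_rpow_neg {a r v : ℝ} (ha : 0 ≤ a) (hv : 0 < v) :
    levyIntegrand a r v ≤ r * a * v ^ (-a) := by
  have hexp : 1 - Real.exp (-(r * v)) ≤ r * v := by linarith [Real.add_one_le_exp (-(r * v))]
  calc levyIntegrand a r v ≤ r * v * (a * v ^ (-(a + 1))) :=
        mul_le_mul_of_nonneg_right hexp (by positivity)
    _ = r * a * v ^ (-a) := by
        rw [show -a = 1 + -(a + 1) by ring, Real.rpow_add hv, Real.rpow_one]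
        ring

lemma integrableOn_levyIntegrand {a r : ℝ} (ha : 0 < a) (ha1 : a < 1) (hr : 0 ≤ r) :
    IntegrableOn (levyIntegrand a r) (Ioi 0) := by
  have hmeas (s : Set ℝ) : AEStronglyMeasurable (levyIntegrand a r) (volume.restrict s) :=
    (measurable_levyIntegrand a r).aestronglyMeasurable
  rw [← Ioc_union_Ioi_eq_Ioi (zero_le_one : (0 : ℝ) ≤ 1)]
  refine .union ?_ ?_
  · have hpow : IntegrableOn (fun v : ℝ ↦ v ^ (-a)) (Ioc 0 1) :=
      (intervalIntegrable_iff_integrableOn_Ioc_of_le zero_le_one).1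
        (intervalIntegral.intervalIntegrable_rpow' (by linarith))
    refine (hpow.const_mul (r * a)).mono' (hmeas _) ?_
    filter_upwards [ae_restrict_mem measurableSet_Ioc] with v hv
    rw [Real.norm_of_nonneg (levyIntegrand_nonneg ha.le hr hv.1.le)]
    exact levyIntegrand_le_mul_rpow_neg ha.le hv.1
  · have hpow : IntegrableOn (fun v : ℝ ↦ v ^ (-(a + 1))) (Ioi 1) :=
      integrableOn_Ioi_rpow_of_lt (by linarith) one_pos
    refine (hpow.const_mul a).mono' (hmeas _) ?_
    filter_upwards [ae_restrict_mem measurableSet_Ioi] with v hv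
    have hv0 : 0 ≤ v := zero_le_one.trans (le_of_lt hv)
    rw [Real.norm_of_nonneg (levyIntegrand_nonneg ha.le hr hv0)]
    exact levyIntegrand_le ha.le hv0

lemma integral_levyIntegrand_one_pos {a : ℝ} (ha : 0 < a) (ha1 : a < 1) :
    0 < ∫ v in Ioi 0, levyIntegrand a 1 v := by
  refine (setIntegral_pos_iff_support_of_nonneg_ae ?_
    (integrableOn_levyIntegrand ha ha1 zero_le_one)).2 ?_
  · filter_upwards [ae_restrict_mem measurableSet_Ioi] with v hv
    exact levyIntegrand_nonneg ha.le zero_le_one (le_of_lt hv)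
  · have hsub : Ioi 0 ⊆ Function.support (levyIntegrand a 1) ∩ Ioi 0 := by
      refine fun v (hv : 0 < v) ↦ ⟨?_, hv⟩
      have : 0 < 1 - Real.exp (-(1 * v)) := sub_pos.2 (Real.exp_lt_one_iff.2 (by linarith))
      exact (mul_pos this (by positivity)).ne'
    exact (by simp : (0 : ℝ≥0∞) < volume (Ioi (0 : ℝ))).trans_le (measure_mono hsub)

lemma integral_levyIntegrand {a r : ℝ} (ha : 0 < a) (hr : 0 ≤ r) :
    ∫ v in Ioi 0, levyIntegrand a r v = r ^ a * ∫ v in Ioi 0, levyIntegrand a 1 v := by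
  rcases hr.eq_or_lt with rfl | hr
  · simp [levyIntegrand, Real.zero_rpow ha.ne']
  have hscale : EqOn (levyIntegrand a r) (fun v ↦ r ^ (a + 1) * levyIntegrand a 1 (r * v))
      (Ioi 0) := by
    intro v (hv : 0 < v)
    have hcancel : r ^ (a + 1) * r ^ (-(a + 1)) = 1 := by
      rw [← Real.rpow_add hr, add_neg_cancel, Real.rpow_zero]
    simp only [levyIntegrand]
    rw [Real.mul_rpow hr.le hv.le, one_mul]
    linear_combination (-(1 - Real.exp (-(r * v))) * (a * v ^ (-(a + 1)))) * hcancel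
  rw [setIntegral_congr_fun measurableSet_Ioi hscale, integral_const_mul,
    integral_comp_mul_left_Ioi _ _ hr, mul_zero, smul_eq_mul, Real.rpow_add hr, Real.rpow_one]
  field_simp

lemma measurable_paretoPDF (ε a : ℝ) : Measurable (paretoPDF ε a) :=
  (measurable_paretoPDFReal ε a).ennreal_ofReal

lemma integral_paretoMeasure {ε a : ℝ} (hε : 0 ≤ ε) (ha : 0 ≤ a) (g : ℝ → ℝ) :
    ∫ u, g u ∂(paretoMeasure ε a) = ∫ u in Ioi ε, ε ^ a * (a * u ^ (-(a + 1))) * g u := by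
  rw [paretoMeasure, integral_withDensity_eq_integral_toReal_smul (measurable_paretoPDF ε a)
    (.of_forall fun _ ↦ ENNReal.ofReal_lt_top), ← integral_Ici_eq_integral_Ioi,
    ← integral_indicator measurableSet_Ici]
  refine integral_congr_ae (.of_forall fun u ↦ ?_)
  have hpdf : (paretoPDF ε a u).toReal = paretoPDFReal ε a u :=
    ENNReal.toReal_ofReal (paretoPDFReal_nonneg hε ha u)
  simp only [hpdf, paretoPDFReal]
  by_cases hu : ε ≤ u
  · simp only [hu, if_true, indicator_of_mem (mem_Ici.2 hu), smul_eq_mul]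
    ring
  · simp only [hu, if_false, zero_smul, indicator_of_notMem (mt mem_Ici.1 hu)]

lemma ae_nonneg_paretoMeasure {ε : ℝ} (hε : 0 ≤ ε) (a : ℝ) :
    ∀ᵐ u ∂(paretoMeasure ε a), 0 ≤ u := by
  rw [paretoMeasure, ae_withDensity_iff (measurable_paretoPDF ε a)]
  exact .of_forall fun u hu ↦ not_lt.1 fun h ↦ hu (paretoPDF_of_lt (h.trans_le hε))

lemma one_sub_mgf_paretoMeasure {ε a r : ℝ} (hε : 0 < ε) (ha : 0 < a) (hr : 0 ≤ r) :
    1 - mgf id (paretoMeasure ε a) (-r) = ε ^ a * ∫ v in Ioi ε, levyIntegrand a r v := by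
  have := isProbabilityMeasure_paretoMeasure hε ha
  have hexp : Integrable (fun u ↦ Real.exp (-r * u)) (paretoMeasure ε a) := by
    refine (integrable_const (1 : ℝ)).mono' (by fun_prop) ?_
    filter_upwards [ae_nonneg_paretoMeasure hε.le a] with u hu
    rw [Real.norm_eq_abs, Real.abs_exp, Real.exp_le_one_iff]
    exact mul_nonpos_of_nonpos_of_nonneg (neg_nonpos.2 hr) hu
  calc 1 - mgf id (paretoMeasure ε a) (-r)
      = ∫ u, (1 - Real.exp (-r * u)) ∂(paretoMeasure ε a) := by
        rw [integral_sub (integrable_const _) hexp]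
        simp [mgf]
    _ = ε ^ a * ∫ v in Ioi ε, levyIntegrand a r v := by
        rw [integral_paretoMeasure hε.le ha.le, ← integral_const_mul]
        refine setIntegral_congr_fun measurableSet_Ioi fun v _ ↦ ?_
        simp only [levyIntegrand, neg_mul]
        ring

lemma tendsto_mgf_paretoMeasure_pow {a t r : ℝ} (ha : 0 < a) (ha1 : a < 1) (ht : 0 < t)
    (hr : 0 ≤ r) {ε : ℕ → ℝ} (hε : ∀ k, 0 < ε k)
    (hεa : ∀ k, ε k ^ a = t / ((∫ v in Ioi 0, levyIntegrand a 1 v) * (k + 1))) :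
    Tendsto (fun k ↦ mgf id (paretoMeasure (ε k) a) (-r) ^ k) atTop
      (𝓝 (Real.exp (-t * r ^ a))) := by
  set c := ∫ v in Ioi 0, levyIntegrand a 1 v with hc
  have hc0 : 0 < c := integral_levyIntegrand_one_pos ha ha1
  have hε0 : Tendsto ε atTop (𝓝 0) := by
    have h : Tendsto (fun k ↦ (ε k ^ a) ^ a⁻¹) atTop (𝓝 (0 ^ a⁻¹)) := by
      simp only [hεa]
      refine Tendsto.rpow_const (Tendsto.const_div_atTop ?_ _) (.inr (by positivity))
      exact (tendsto_atTop_add_const_right _ _ tendsto_natCast_atTop_atTop).const_mul_atTop hc0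
    rw [Real.zero_rpow (by positivity)] at h
    exact h.congr fun k ↦ Real.rpow_rpow_inv (hε k).le ha.ne'
  have hint : Tendsto (fun k ↦ ∫ v in Ioi (ε k), levyIntegrand a r v) atTop (𝓝 (r ^ a * c)) := by
    rw [hc, ← integral_levyIntegrand ha hr]
    refine ((aecover_Ioi_of_Ioi hε0).integral_tendsto_of_countably_generated
      (integrableOn_levyIntegrand ha ha1 hr)).congr fun k ↦ ?_
    rw [Measure.restrict_restrict measurableSet_Ioi,
      inter_eq_self_of_subset_left (Ioi_subset_Ioi (hε k).le)]
  have hlim : Tendsto (fun k : ℕ ↦ (k : ℝ) * (mgf id (paretoMeasure (ε k) a) (-r) - 1)) atTop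
      (𝓝 (-t * r ^ a)) := by
    have h := ((tendsto_natCast_div_add_atTop (1 : ℝ)).mul hint).const_mul (-(t / c))
    rw [show -(t / c) * (1 * (r ^ a * c)) = -t * r ^ a by field_simp] at h
    refine h.congr fun k ↦ ?_
    rw [← neg_sub, one_sub_mgf_paretoMeasure (hε k) ha hr, hεa]
    field_simp
  exact (Real.tendsto_one_add_pow_exp_of_tendsto hlim).congr fun k ↦ by rw [add_sub_cancel]

variable {V : Type*} [NormedAddCommGroup V] [InnerProductSpace ℝ V] [FiniteDimensional ℝ V]
  [MeasurableSpace V] [BorelSpace V] [Nontrivial V]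

namespace HasDerivKernelBound

lemma mgf_pow {ν : Measure ℝ} [IsProbabilityMeasure ν] (hν : ∀ᵐ u ∂ν, 0 ≤ u) (k : ℕ) :
    HasDerivKernelBound (Real.exp 1 * (finrank ℝ V + 2)!)
      (fun ξ : V ↦ mgf id ν (-‖ξ‖ ^ 2) ^ k) := by
  induction k with
  | zero => simpa using one
  | succ k ih => simpa only [pow_succ] using ih.mul_mgf hν

lemma exp_neg_mul_rpow {a t : ℝ} (ha : 0 < a) (ha1 : a ≤ 1) (ht : 0 < t) :
    HasDerivKernelBound (Real.exp 1 * (finrank ℝ V + 2)!)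
      (fun ξ : V ↦ Real.exp (-t * (‖ξ‖ ^ 2) ^ a)) := by
  rcases ha1.eq_or_lt with rfl | ha1
  · have hdirac : ∀ᵐ u ∂(Measure.dirac t), 0 ≤ u := (ae_dirac_iff measurableSet_Ici).2 ht.le
    simpa [mgf, mul_comm t] using mgf_pow (V := V) hdirac 1
  · let ε (k : ℕ) : ℝ := (t / ((∫ v in Ioi 0, levyIntegrand a 1 v) * (k + 1))) ^ a⁻¹
    have hc := integral_levyIntegrand_one_pos ha ha1
    have hε (k : ℕ) : 0 < ε k := by positivity
    have := fun k ↦ isProbabilityMeasure_paretoMeasure (hε k) ha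
    exact of_tendsto (fun k ↦ mgf_pow (ae_nonneg_paretoMeasure (hε k).le a) k) fun ξ ↦
      tendsto_mgf_paretoMeasure_pow ha ha1 ht (by positivity) hε fun k ↦
        Real.rpow_inv_rpow (by positivity) ha.ne'

end HasDerivKernelBound

lemma norm_pow_mul_norm_derivKernel_exp_le {s t : ℝ} (hs : 0 < s) (hs2 : s ≤ 2) (ht : 0 < t)
    (v w : V) :
    ‖w‖ ^ (finrank ℝ V + 1) * ‖derivKernel (fun ξ ↦ Real.exp (-t * ‖ξ‖ ^ s)) v w‖
      ≤ Real.exp 1 * (finrank ℝ V + 2)! * ‖v‖ := by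
  have hpow (ξ : V) : (‖ξ‖ ^ 2) ^ (s / 2) = ‖ξ‖ ^ s := by
    rw [← Real.rpow_natCast_mul (norm_nonneg ξ)]
    congr 1
    push_cast
    ring
  have h := HasDerivKernelBound.exp_neg_mul_rpow (V := V) (half_pos hs)
    ((div_le_one two_pos).2 hs2) ht
  simp only [hpow] at h
  refine h.norm_pow_mul_norm_derivKernel_le ?_ v w
  simpa only [Real.abs_exp] using integrable_norm_mul_exp_neg_mul_norm_rpow ht hs

lemma norm_derivKernel_exp_le {s t : ℝ} (hs : 0 < s) (ht : 0 < t) (v w : V) :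
    ‖derivKernel (fun ξ ↦ Real.exp (-t * ‖ξ‖ ^ s)) v w‖
      ≤ ‖v‖ * ((∫ ξ : V, ‖ξ‖ * Real.exp (-‖ξ‖ ^ s)) * t ^ (-((finrank ℝ V + 1) / s))) := by
  rw [← integral_norm_mul_exp_neg_mul_norm_rpow ht hs]
  simpa only [Real.abs_exp] using norm_derivKernel_le
    (m := fun ξ : V ↦ Real.exp (-t * ‖ξ‖ ^ s))
    (by simpa only [Real.abs_exp] using integrable_norm_mul_exp_neg_mul_norm_rpow ht hs) v w

lemma dKer_eq_re_derivKernel {n : ℕ} {α t : ℝ} (hα : 0 < α) (ht : 0 < t) (j : Fin n) (w : Rn n) :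
    dKer n α t j w = (2 * π * Complex.I * derivKernel
      (fun ξ ↦ Real.exp (-t * ‖ξ‖ ^ (2 * α))) (EuclideanSpace.single j 1) w).re := by
  have : NeZero n := ⟨j.pos.ne'⟩
  exact fderiv_re_fourierInv_apply (integrable_exp_neg_mul_norm_rpow ht (by positivity))
    (by simpa only [Real.abs_exp] using
      integrable_norm_mul_exp_neg_mul_norm_rpow ht (by positivity)) w _

lemma exists_abs_dKer_le (n : ℕ) {α : ℝ} (hα : 0 < α) (hα1 : α ≤ 1) :
    ∃ C > 0, ∀ t > 0, ∀ (j : Fin n) (w : Rn n), ‖w‖ ^ (n + 1) * |dKer n α t j w| ≤ C ∧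
      |dKer n α t j w| ≤ C * t ^ (-((n + 1) / (2 * α))) := by
  set A : ℝ := Real.exp 1 * (n + 2)!
  set B := ∫ ξ : Rn n, ‖ξ‖ * Real.exp (-‖ξ‖ ^ (2 * α))
  have hB : 0 ≤ B := integral_nonneg fun ξ ↦ by positivity
  refine ⟨2 * π * (A + B), by positivity, fun t ht j w ↦ ?_⟩
  have : NeZero n := ⟨j.pos.ne'⟩
  set K := derivKernel (fun ξ ↦ Real.exp (-t * ‖ξ‖ ^ (2 * α))) (EuclideanSpace.single j 1) w
  have hdK : |dKer n α t j w| ≤ 2 * π * ‖K‖ := by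
    rw [dKer_eq_re_derivKernel hα ht]
    refine (Complex.abs_re_le_norm _).trans_eq ?_
    rw [norm_mul, norm_mul, norm_mul, Complex.norm_I, Complex.norm_two, Complex.norm_real,
      Real.norm_of_nonneg Real.pi_nonneg, mul_one]
  have hv : ‖(EuclideanSpace.single j 1 : Rn n)‖ = 1 := by simp
  have hdecay : ‖w‖ ^ (n + 1) * ‖K‖ ≤ A := by
    have h := norm_pow_mul_norm_derivKernel_exp_le (by positivity) (by linarith : 2 * α ≤ 2) ht
      (EuclideanSpace.single j 1 : Rn n) w
    rwa [finrank_euclideanSpace_fin, hv, mul_one] at h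
  have htime : ‖K‖ ≤ B * t ^ (-((n + 1) / (2 * α))) := by
    have h := norm_derivKernel_exp_le (by positivity : 0 < 2 * α) ht
      (EuclideanSpace.single j 1 : Rn n) w
    rwa [finrank_euclideanSpace_fin, hv, one_mul] at h
  constructor
  · calc ‖w‖ ^ (n + 1) * |dKer n α t j w| ≤ ‖w‖ ^ (n + 1) * (2 * π * ‖K‖) := by gcongr
      _ = 2 * π * (‖w‖ ^ (n + 1) * ‖K‖) := by ring
      _ ≤ 2 * π * (A + B) := by gcongr; linarith
  · calc |dKer n α t j w| ≤ 2 * π * (B * t ^ (-((n + 1) / (2 * α)))) := hdK.trans (by gcongr)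
      _ = 2 * π * B * t ^ (-((n + 1) / (2 * α))) := by ring
      _ ≤ 2 * π * (A + B) * t ^ (-((n + 1) / (2 * α))) := by
        gcongr
        exact le_add_of_nonneg_left (by positivity)

end StableMultiplier

section MaximalFunction

open Filter Topology Metric Module
open scoped NNReal

lemma lowerSemicontinuous_measure_ball {X : Type*} [PseudoMetricSpace X] [MeasurableSpace X]
    (ν : Measure X) (r : ℝ) : LowerSemicontinuous fun x ↦ ν (ball x r) := by
  intro x c hc
  have hmono : Monotone fun k : ℕ ↦ ball x (r - 1 / ((k : ℝ) + 1)) := fun i j hij ↦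
    ball_subset_ball (sub_le_sub_left (one_div_le_one_div_of_le (by positivity) (by gcongr)) r)
  have hunion : ball x r = ⋃ k : ℕ, ball x (r - 1 / ((k : ℝ) + 1)) := by
    refine subset_antisymm (fun y hy ↦ ?_) (iUnion_subset fun k ↦ ball_subset_ball ?_)
    · obtain ⟨k, hk⟩ := exists_nat_one_div_lt (sub_pos.2 (mem_ball.1 hy))
      exact mem_iUnion.2 ⟨k, mem_ball.2 (by linarith)⟩
    · exact sub_le_self r (by positivity)
  change c < ν (ball x r) at hc
  rw [hunion, hmono.measure_iUnion] at hc
  obtain ⟨k, hk⟩ := lt_iSup_iff.1 hc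
  filter_upwards [ball_mem_nhds x (Nat.one_div_pos_of_nat (α := ℝ) (n := k))] with y hy
  refine hk.trans_le (measure_mono (ball_subset_ball' ?_))
  rw [dist_comm]
  linarith [mem_ball.1 hy]

section Average

variable {X : Type*} [MeasurableSpace X] {μ : Measure X}

lemma setLAverage_mono {s : Set X} {f g : X → ℝ≥0∞} (hs : MeasurableSet s)
    (h : ∀ y ∈ s, f y ≤ g y) : ⨍⁻ y in s, f y ∂μ ≤ ⨍⁻ y in s, g y ∂μ := by
  rw [setLAverage_eq, setLAverage_eq]
  gcongr 1
  exact setLIntegral_mono' hs h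

lemma setLAverage_const_le (s : Set X) (a : ℝ≥0∞) : ⨍⁻ _ in s, a ∂μ ≤ a := by
  rw [setLAverage_eq, setLIntegral_const]
  exact ENNReal.div_le_of_le_mul le_rfl

lemma setLAverage_add {s : Set X} {f : X → ℝ≥0∞} (hf : Measurable f) (g : X → ℝ≥0∞) :
    ⨍⁻ y in s, f y + g y ∂μ = ⨍⁻ y in s, f y ∂μ + ⨍⁻ y in s, g y ∂μ := by
  simp only [setLAverage_eq, lintegral_add_left hf, ENNReal.add_div]

lemma setLAverage_const_mul {s : Set X} {f : X → ℝ≥0∞} (hf : Measurable f) (c : ℝ≥0∞) :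
    ⨍⁻ y in s, c * f y ∂μ = c * ⨍⁻ y in s, f y ∂μ := by
  simp only [setLAverage_eq, lintegral_const_mul c hf, mul_div_assoc]

end Average

section Defn

variable {X : Type*} [PseudoMetricSpace X] [MeasurableSpace X] (μ : Measure X)

/-- The centred Hardy–Littlewood maximal function, defined for nonnegative extended-valued
functions so that no integrability is needed. -/
def maximalFunction (f : X → ℝ≥0∞) (x : X) : ℝ≥0∞ :=
  ⨆ (r : ℝ) (_ : 0 < r), ⨍⁻ y in ball x r, f y ∂μ

variable {μ}

lemma setLAverage_ball_le_maximalFunction (f : X → ℝ≥0∞) (x : X) {r : ℝ} (hr : 0 < r) :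
    ⨍⁻ y in ball x r, f y ∂μ ≤ maximalFunction μ f x :=
  le_iSup₂ (f := fun (r : ℝ) (_ : 0 < r) ↦ ⨍⁻ y in ball x r, f y ∂μ) r hr

lemma maximalFunction_le_iff {f : X → ℝ≥0∞} {x : X} {a : ℝ≥0∞} :
    maximalFunction μ f x ≤ a ↔ ∀ r > 0, ⨍⁻ y in ball x r, f y ∂μ ≤ a :=
  iSup₂_le_iff

lemma lt_maximalFunction_iff {f : X → ℝ≥0∞} {x : X} {a : ℝ≥0∞} :
    a < maximalFunction μ f x ↔ ∃ r > 0, a < ⨍⁻ y in ball x r, f y ∂μ := by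
  simp only [maximalFunction, lt_iSup_iff, exists_prop, gt_iff_lt]

lemma maximalFunction_add_le {f : X → ℝ≥0∞} (hf : Measurable f) (g : X → ℝ≥0∞) (x : X) :
    maximalFunction μ (fun y ↦ f y + g y) x ≤ maximalFunction μ f x + maximalFunction μ g x := by
  refine maximalFunction_le_iff.2 fun r hr ↦ ?_
  rw [setLAverage_add hf]
  exact add_le_add (setLAverage_ball_le_maximalFunction f x hr)
    (setLAverage_ball_le_maximalFunction g x hr)

lemma maximalFunction_rpow_le_indicator_add_compl {f : X → ℝ≥0∞} (hf : Measurable f) {S : Set X}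
    (hS : MeasurableSet S) {s : ℝ} (hs : 1 ≤ s) (x : X) :
    maximalFunction μ f x ^ s ≤ 2 ^ (s - 1) * (maximalFunction μ (S.indicator f) x ^ s
      + maximalFunction μ (Sᶜ.indicator f) x ^ s) :=
  calc maximalFunction μ f x ^ s
      ≤ (maximalFunction μ (S.indicator f) x + maximalFunction μ (Sᶜ.indicator f) x) ^ s := by
        refine ENNReal.rpow_le_rpow ?_ (zero_le_one.trans hs)
        conv_lhs => rw [← indicator_self_add_compl S f]
        exact maximalFunction_add_le (hf.indicator hS) _ x
    _ ≤ _ := ENNReal.rpow_add_le_mul_rpow_add_rpow _ _ hs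

variable [OpensMeasurableSpace X]

lemma maximalFunction_mono {f g : X → ℝ≥0∞} (h : ∀ y, f y ≤ g y) (x : X) :
    maximalFunction μ f x ≤ maximalFunction μ g x :=
  iSup₂_mono fun _ _ ↦ setLAverage_mono measurableSet_ball fun y _ ↦ h y

lemma maximalFunction_le_of_le {f : X → ℝ≥0∞} {a : ℝ≥0∞} (h : ∀ y, f y ≤ a) (x : X) :
    maximalFunction μ f x ≤ a :=
  maximalFunction_le_iff.2 fun _ _ ↦
    (setLAverage_mono measurableSet_ball fun y _ ↦ h y).trans (setLAverage_const_le _ a)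

end Defn

section Proper

variable {X : Type*} [PseudoMetricSpace X] [ProperSpace X] [MeasurableSpace X] {μ : Measure X}
  [IsFiniteMeasureOnCompacts μ]

lemma setLIntegral_ball_le_mul_maximalFunction (f : X → ℝ≥0∞) (x : X) {r : ℝ} (hr : 0 < r) :
    ∫⁻ y in ball x r, f y ∂μ ≤ μ (ball x r) * maximalFunction μ f x := by
  rw [← measure_mul_setLAverage f measure_ball_lt_top.ne]
  gcongr
  exact setLAverage_ball_le_maximalFunction f x hr

lemma mul_measure_ball_le_of_lt_setLAverage {f : X → ℝ≥0∞} {x : X} {r : ℝ} {l : ℝ≥0∞}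
    (h : l < ⨍⁻ y in ball x r, f y ∂μ) : l * μ (ball x r) ≤ ∫⁻ y in ball x r, f y ∂μ := by
  rw [← measure_mul_setLAverage f measure_ball_lt_top.ne, mul_comm]
  gcongr

end Proper

lemma lintegral_rpow_eq_top_of_Ioi (s : ℝ) : ∫⁻ l in Ioi (0 : ℝ), ENNReal.ofReal (l ^ s) = ∞ := by
  by_contra h
  refine not_integrableOn_Ioi_rpow s ((lintegral_ofReal_ne_top_iff_integrable
    (by fun_prop : Measurable fun l : ℝ ↦ l ^ s).aestronglyMeasurable ?_).1 h)
  filter_upwards [ae_restrict_mem measurableSet_Ioi] with l hl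
  exact Real.rpow_nonneg (le_of_lt hl) s

lemma setLIntegral_Ioo_rpow {s y : ℝ} (hs : -1 < s) (hy : 0 ≤ y) :
    ∫⁻ l in Ioo 0 y, ENNReal.ofReal (l ^ s) = ENNReal.ofReal (y ^ (s + 1) / (s + 1)) := by
  have hi : IntegrableOn (fun l : ℝ ↦ l ^ s) (Ioo 0 y) :=
    (intervalIntegral.intervalIntegrable_rpow' hs (a := 0) (b := y)).1.mono_set
      Ioo_subset_Ioc_self
  rw [← ofReal_integral_eq_lintegral_ofReal hi, ← integral_Ioc_eq_integral_Ioo,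
    ← intervalIntegral.integral_of_le hy, integral_rpow (Or.inl hs),
    Real.zero_rpow (by linarith), sub_zero]
  filter_upwards [ae_restrict_mem measurableSet_Ioo] with l hl
  exact Real.rpow_nonneg hl.1.le _

lemma ofReal_mul_setLIntegral_ofReal_lt {p : ℝ} (hp : 0 < p) (x : ℝ≥0∞) :
    ENNReal.ofReal p *
      ∫⁻ l in Ioi (0 : ℝ) ∩ {l | ENNReal.ofReal l < x}, ENNReal.ofReal (l ^ (p - 1)) = x ^ p := by
  rcases eq_or_ne x ∞ with rfl | hx
  · have : Ioi (0 : ℝ) ∩ {l | ENNReal.ofReal l < ∞} = Ioi 0 :=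
      inter_eq_left.2 fun l _ ↦ ENNReal.ofReal_lt_top
    rw [this, lintegral_rpow_eq_top_of_Ioi, ENNReal.mul_top (ENNReal.ofReal_pos.2 hp).ne',
      ENNReal.top_rpow_of_pos hp]
  · lift x to ℝ≥0 using hx
    have : Ioi (0 : ℝ) ∩ {l | ENNReal.ofReal l < x} = Ioo 0 (x : ℝ) := by
      ext l
      refine and_congr_right fun (hl : 0 < l) ↦ ?_
      rw [mem_ofPred_eq, ← ENNReal.ofReal_coe_nnreal,
        ENNReal.ofReal_lt_ofReal_iff_of_nonneg hl.le]
    rw [this, setLIntegral_Ioo_rpow (by linarith) x.coe_nonneg, ← ENNReal.ofReal_mul hp.le,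
      sub_add_cancel, mul_div_cancel₀ _ hp.ne', ← ENNReal.ofReal_rpow_of_nonneg x.coe_nonneg hp.le,
      ENNReal.ofReal_coe_nnreal]

lemma lintegral_rpow_eq_lintegral_measure_lt {X : Type*} [MeasurableSpace X] (ν : Measure X)
    [SFinite ν] {g : X → ℝ≥0∞} (hg : Measurable g) {p : ℝ} (hp : 0 < p) :
    ∫⁻ x, g x ^ p ∂ν = ENNReal.ofReal p *
      ∫⁻ l in Ioi (0 : ℝ), ν {x | ENNReal.ofReal l < g x} * ENNReal.ofReal (l ^ (p - 1)) := by
  have hS : MeasurableSet {z : X × ℝ | ENNReal.ofReal z.2 < g z.1} :=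
    measurableSet_lt (by fun_prop) (by fun_prop)
  let F : X × ℝ → ℝ≥0∞ := {z : X × ℝ | ENNReal.ofReal z.2 < g z.1}.indicator
    fun z ↦ ENNReal.ofReal (z.2 ^ (p - 1))
  have hF : Measurable F := (by fun_prop : Measurable fun z : X × ℝ ↦
    ENNReal.ofReal (z.2 ^ (p - 1))).indicator hS
  have inner_x (x : X) : ENNReal.ofReal p * ∫⁻ l in Ioi (0 : ℝ), F (x, l) = g x ^ p := by
    rw [← ofReal_mul_setLIntegral_ofReal_lt hp (g x), inter_comm, ← Measure.restrict_restrict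
      (measurableSet_lt (by fun_prop) (by fun_prop)), ← lintegral_indicator
      (measurableSet_lt (by fun_prop) (by fun_prop))]
    rfl
  have inner_l (l : ℝ) : ∫⁻ x, F (x, l) ∂ν
      = ν {x | ENNReal.ofReal l < g x} * ENNReal.ofReal (l ^ (p - 1)) := by
    rw [mul_comm, ← lintegral_indicator_const (measurableSet_lt measurable_const hg)]
    rfl
  calc ∫⁻ x, g x ^ p ∂ν = ∫⁻ x, ENNReal.ofReal p * (∫⁻ l in Ioi (0 : ℝ), F (x, l)) ∂ν :=
        lintegral_congr fun x ↦ (inner_x x).symm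
    _ = ENNReal.ofReal p * ∫⁻ l in Ioi (0 : ℝ), ∫⁻ x, F (x, l) ∂ν := by
        rw [lintegral_const_mul' _ _ ENNReal.ofReal_ne_top,
          lintegral_lintegral_swap (f := fun x l ↦ F (x, l)) hF.aemeasurable]
    _ = _ := by simp_rw [inner_l]

lemma lintegral_const_mul_rpow_withDensity {X : Type*} [MeasurableSpace X] {ν : Measure X}
    {f : X → ℝ≥0∞} (hf : Measurable f) (c : ℝ≥0∞) {s : ℝ} (hs : 0 ≤ s) :
    ∫⁻ x, (c * f x) ^ s ∂(ν.withDensity f) = c ^ s * ∫⁻ x, f x ^ (s + 1) ∂ν := by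
  rw [lintegral_withDensity_eq_lintegral_mul _ hf (by fun_prop),
    ← lintegral_const_mul _ (by fun_prop)]
  refine lintegral_congr fun x ↦ ?_
  rw [Pi.mul_apply, ENNReal.mul_rpow_of_nonneg _ _ hs, mul_left_comm,
    ENNReal.rpow_add_of_nonneg _ _ hs zero_le_one, ENNReal.rpow_one, mul_comm (f x)]

variable {E : Type*} [NormedAddCommGroup E] [MeasurableSpace E] [BorelSpace E] {μ : Measure E}
  [μ.IsAddHaarMeasure]

lemma measurable_maximalFunction (f : E → ℝ≥0∞) : Measurable (maximalFunction μ f) := by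
  refine (lowerSemicontinuous_biSup fun r hr ↦ ?_).measurable
  have key : (fun x ↦ ⨍⁻ y in ball x r, f y ∂μ)
      = (fun a ↦ (μ (ball 0 r))⁻¹ * a) ∘ fun x ↦ μ.withDensity f (ball x r) := by
    ext x
    rw [setLAverage_eq, Measure.addHaar_ball_center, ENNReal.div_eq_inv_mul, Function.comp_apply,
      withDensity_apply _ measurableSet_ball]
  rw [key]
  have hpos : (μ (ball 0 r))⁻¹ ≠ ∞ := ENNReal.inv_ne_top.2 (measure_ball_pos μ 0 hr).ne'
  exact (ENNReal.continuous_const_mul hpos).comp_lowerSemicontinuous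
    (lowerSemicontinuous_measure_ball _ r) fun _ _ h ↦ mul_le_mul_right h _

section Strong

variable [NormedSpace ℝ E] [FiniteDimensional ℝ E]

lemma exists_radius_le_of_lt_setLAverage [Nontrivial E] {f : E → ℝ≥0∞} (hf : ∫⁻ y, f y ∂μ ≠ ∞)
    {l : ℝ≥0∞} (hl : l ≠ 0) :
    ∃ R : ℝ, ∀ (x : E) (r : ℝ), 0 < r → l < ⨍⁻ y in ball x r, f y ∂μ → r ≤ R := by
  set I := (∫⁻ y, f y ∂μ) / (l * μ (ball 0 1))
  have hI : I ≠ ∞ := ENNReal.div_ne_top hf (mul_ne_zero hl (measure_ball_pos μ 0 one_pos).ne')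
  refine ⟨max 1 I.toReal, fun x r hr h ↦ ?_⟩
  have hpow : r ^ finrank ℝ E ≤ I.toReal := by
    rw [← ENNReal.ofReal_le_iff_le_toReal hI]
    refine ENNReal.le_div_iff_mul_le (Or.inl ?_) (Or.inr hf) |>.2 ?_
    · exact mul_ne_zero hl (measure_ball_pos μ 0 one_pos).ne'
    · rw [mul_left_comm, ← Measure.addHaar_ball_of_pos μ x hr]
      exact (mul_measure_ball_le_of_lt_setLAverage h).trans (setLIntegral_le_lintegral _ _)
  rcases le_or_gt r 1 with hr1 | hr1
  · exact hr1.trans (le_max_left _ _)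
  · exact ((le_self_pow₀ hr1.le finrank_pos.ne').trans hpow).trans (le_max_right _ _)

lemma mul_measure_iUnion_closedBall_le {ι : Type*} {u : Set ι} {c : ι → E} {r : ι → ℝ}
    (hr : ∀ i ∈ u, 0 < r i) (hu : u.PairwiseDisjoint fun i ↦ closedBall (c i) (r i))
    {f : E → ℝ≥0∞} {l : ℝ≥0∞} (hl : ∀ i ∈ u, l < ⨍⁻ y in ball (c i) (r i), f y ∂μ) :
    l * μ (⋃ i ∈ u, closedBall (c i) (5 * r i)) ≤ 5 ^ finrank ℝ E * ∫⁻ y, f y ∂μ := by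
  have hcount : u.Countable := hu.countable_of_nonempty_interior fun i hi ↦
    ⟨c i, ball_subset_interior_closedBall (mem_ball_self (hr i hi))⟩
  have : Countable u := hcount
  calc l * μ (⋃ i ∈ u, closedBall (c i) (5 * r i))
      ≤ l * ∑' i : u, μ (closedBall (c i) (5 * r i)) := by
        gcongr
        exact measure_biUnion_le μ hcount _
    _ = ∑' i : u, 5 ^ finrank ℝ E * (l * μ (ball (c i) (r i))) := by
        rw [← ENNReal.tsum_mul_left]
        refine tsum_congr fun i ↦ ?_
        have hri := hr i i.2
        rw [Measure.addHaar_closedBall μ _ (by positivity), Measure.addHaar_ball_of_pos μ _ hri,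
          mul_pow, ENNReal.ofReal_mul (by positivity), ENNReal.ofReal_pow (by positivity),
          ENNReal.ofReal_ofNat]
        ring
    _ ≤ ∑' i : u, 5 ^ finrank ℝ E * ∫⁻ y in ball (c i) (r i), f y ∂μ := by
        gcongr with i
        exact mul_measure_ball_le_of_lt_setLAverage (hl i i.2)
    _ = 5 ^ finrank ℝ E * ∫⁻ y in ⋃ i ∈ u, ball (c i) (r i), f y ∂μ := by
        rw [ENNReal.tsum_mul_left, lintegral_biUnion hcount (fun _ _ ↦ measurableSet_ball)
          (hu.mono fun _ ↦ ball_subset_closedBall)]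
    _ ≤ _ := by
        gcongr
        exact Measure.restrict_le_self

variable [Nontrivial E]

theorem mul_measure_lt_maximalFunction_le (f : E → ℝ≥0∞) (l : ℝ≥0∞) :
    l * μ {x | l < maximalFunction μ f x} ≤ 5 ^ finrank ℝ E * ∫⁻ y, f y ∂μ := by
  rcases eq_or_ne l 0 with rfl | hl
  · simp
  rcases eq_or_ne (∫⁻ y, f y ∂μ) ∞ with hf | hf
  · simp [hf]
  obtain ⟨R, hR⟩ := exists_radius_le_of_lt_setLAverage hf hl
  let t : Set (E × ℝ) := {b | 0 < b.2 ∧ l < ⨍⁻ y in ball b.1 b.2, f y ∂μ}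
  obtain ⟨u, hut, hdisj, hcov⟩ := Vitali.exists_disjoint_subfamily_covering_enlargement_closedBall
    t Prod.fst Prod.snd R (fun b hb ↦ hR b.1 b.2 hb.1 hb.2) 5 (by norm_num)
  have hsub : {x | l < maximalFunction μ f x} ⊆ ⋃ b ∈ u, closedBall b.1 (5 * b.2) := by
    intro x hx
    obtain ⟨r, hr, hlr⟩ := lt_maximalFunction_iff.1 (show l < maximalFunction μ f x from hx)
    obtain ⟨b, hb, hbs⟩ := hcov (x, r) ⟨hr, hlr⟩
    exact mem_biUnion hb (hbs (mem_closedBall_self hr.le))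
  calc l * μ {x | l < maximalFunction μ f x}
      ≤ l * μ (⋃ b ∈ u, closedBall b.1 (5 * b.2)) := by gcongr
    _ ≤ _ := mul_measure_iUnion_closedBall_le (fun b hb ↦ (hut hb).1) hdisj fun b hb ↦ (hut hb).2

lemma mul_measure_lt_maximalFunction_le_setLIntegral {f : E → ℝ≥0∞} (hf : Measurable f)
    (l : ℝ≥0∞) :
    l * μ {x | l < maximalFunction μ f x}
      ≤ 2 * 5 ^ finrank ℝ E * ∫⁻ y in {y | l < 2 * f y}, f y ∂μ := by
  have hs : MeasurableSet {y | l < 2 * f y} := measurableSet_lt measurable_const (hf.const_mul _)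
  set g := {y | l < 2 * f y}.indicator f with hg
  have hfg (y : E) : f y ≤ g y + l / 2 := by
    by_cases hy : l < 2 * f y
    · exact (indicator_of_mem (show y ∈ {y | l < 2 * f y} from hy) f).ge.trans le_self_add
    · refine le_add_left ((ENNReal.le_div_iff_mul_le (by simp) (by simp)).2 ?_)
      rw [mul_comm]
      exact not_lt.1 hy
  have hsub : {x | l < maximalFunction μ f x} ⊆ {x | l / 2 < maximalFunction μ g x} := by
    intro x (hx : l < maximalFunction μ f x)
    have hle : maximalFunction μ f x ≤ maximalFunction μ g x + l / 2 :=
      (maximalFunction_mono hfg x).trans ((maximalFunction_add_le (hf.indicator hs) _ x).trans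
        (add_le_add_right (maximalFunction_le_of_le (fun _ ↦ le_rfl) x) _))
    refine lt_of_add_lt_add_right (a := l / 2) ?_
    rw [ENNReal.add_halves]
    exact hx.trans_le hle
  calc l * μ {x | l < maximalFunction μ f x}
      ≤ 2 * (l / 2 * μ {x | l / 2 < maximalFunction μ g x}) := by
        rw [← mul_assoc, ENNReal.mul_div_cancel two_ne_zero ENNReal.ofNat_ne_top]
        gcongr
    _ ≤ 2 * (5 ^ finrank ℝ E * ∫⁻ y, g y ∂μ) :=
        mul_le_mul_right (mul_measure_lt_maximalFunction_le g (l / 2)) 2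
    _ = _ := by rw [hg, lintegral_indicator hs, mul_assoc]

lemma measure_lt_maximalFunction_mul_rpow_le {f : E → ℝ≥0∞} (hf : Measurable f) {p : ℝ}
    (hp : p ≠ 1) {l : ℝ} (hl : 0 < l) :
    μ {x | ENNReal.ofReal l < maximalFunction μ f x} * ENNReal.ofReal (l ^ (p - 1))
      ≤ 2 * 5 ^ finrank ℝ E * (μ.withDensity f {x | ENNReal.ofReal l < 2 * f x}
        * ENNReal.ofReal (l ^ (p - 1 - 1))) := by
  have hlp : ENNReal.ofReal (l ^ (p - 1))
      = ENNReal.ofReal l * ENNReal.ofReal (l ^ (p - 1 - 1)) := by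
    rw [← ENNReal.ofReal_mul hl.le, ← Real.rpow_one_add' hl.le]
    · ring_nf
    · rwa [add_sub_cancel, sub_ne_zero]
  rw [hlp, ← mul_assoc, mul_comm (μ _), ← mul_assoc, withDensity_apply _
    (measurableSet_lt measurable_const (hf.const_mul _))]
  exact mul_le_mul_left (mul_measure_lt_maximalFunction_le_setLIntegral hf _) _

theorem exists_lintegral_maximalFunction_rpow_le (μ : Measure E) [μ.IsAddHaarMeasure] {p : ℝ}
    (hp : 1 < p) : ∃ C : ℝ≥0, ∀ f : E → ℝ≥0∞, Measurable f →
      ∫⁻ x, maximalFunction μ f x ^ p ∂μ ≤ C * ∫⁻ x, f x ^ p ∂μ := by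
  have hp0 : 0 < p := by linarith
  have hp1 : 0 < p - 1 := by linarith
  set K : ℝ≥0 := 2 * 5 ^ finrank ℝ E
  refine ⟨p.toNNReal * K * ((p - 1).toNNReal⁻¹ * 2 ^ (p - 1)), fun f hf ↦ ?_⟩
  let ν := μ.withDensity f
  have hweak (l : ℝ) (hl : 0 < l) :
      μ {x | ENNReal.ofReal l < maximalFunction μ f x} * ENNReal.ofReal (l ^ (p - 1))
        ≤ K * (ν {x | ENNReal.ofReal l < 2 * f x} * ENNReal.ofReal (l ^ (p - 1 - 1))) := by
    push_cast [K]
    exact measure_lt_maximalFunction_mul_rpow_le hf hp.ne' hl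
  calc ∫⁻ x, maximalFunction μ f x ^ p ∂μ
      = ENNReal.ofReal p * ∫⁻ l in Ioi (0 : ℝ),
          μ {x | ENNReal.ofReal l < maximalFunction μ f x} * ENNReal.ofReal (l ^ (p - 1)) :=
        lintegral_rpow_eq_lintegral_measure_lt μ (measurable_maximalFunction f) hp0
    _ ≤ ENNReal.ofReal p * ∫⁻ l in Ioi (0 : ℝ),
          K * (ν {x | ENNReal.ofReal l < 2 * f x} * ENNReal.ofReal (l ^ (p - 1 - 1))) := by
        gcongr 1
        exact setLIntegral_mono' measurableSet_Ioi hweak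
    _ = ENNReal.ofReal p * (K * ((ENNReal.ofReal (p - 1))⁻¹ * ∫⁻ x, (2 * f x) ^ (p - 1) ∂ν)) := by
        rw [lintegral_const_mul' _ _ ENNReal.coe_ne_top,
          lintegral_rpow_eq_lintegral_measure_lt ν (hf.const_mul 2) hp1, ← mul_assoc _⁻¹,
          ENNReal.inv_mul_cancel (ENNReal.ofReal_pos.2 hp1).ne' ENNReal.ofReal_ne_top, one_mul]
    _ = _ := by
        rw [lintegral_const_mul_rpow_withDensity hf 2 hp1.le, sub_add_cancel, ENNReal.ofReal,
          ENNReal.ofReal]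
        push_cast [ENNReal.coe_inv (Real.toNNReal_pos.2 hp1).ne',
          ENNReal.coe_rpow_of_nonneg _ hp1.le]
        ring

end Strong

end MaximalFunction

section LogHolder

open Filter Topology Bornology

variable {E : Type*} [NormedAddCommGroup E] {D qinf : ℝ} {q : E → ℝ}

/-- Log-Hölder continuity with decay to `qinf` at infinity, with one constant `D` for both. Here
the conditions bear on `q`, while `IsPLog` imposes them on `1 / p`. -/
structure LogHolderWith (D qinf : ℝ) (q : E → ℝ) : Prop where
  abs_sub_le (x y : E) : |q x - q y| ≤ D / Real.log (Real.exp 1 + 1 / ‖x - y‖)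
  abs_sub_limit_le (x : E) : |q x - qinf| ≤ D / Real.log (Real.exp 1 + ‖x‖)

lemma one_le_log_exp_one_add {r : ℝ} (hr : 0 ≤ r) : 1 ≤ Real.log (Real.exp 1 + r) := by
  rw [Real.le_log_iff_exp_le (by positivity)]
  linarith

lemma tendsto_div_log_exp_one_add (D : ℝ) :
    Tendsto (fun r ↦ D / Real.log (Real.exp 1 + r)) atTop (𝓝 0) :=
  (Real.tendsto_log_atTop.comp (tendsto_atTop_add_const_left _ _ tendsto_id)).const_div_atTop D

namespace LogHolderWith

lemma nonneg (hq : LogHolderWith D qinf q) : 0 ≤ D := by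
  simpa using (abs_nonneg _).trans (hq.abs_sub_limit_le 0)

lemma abs_sub_limit_le_const (hq : LogHolderWith D qinf q) (x : E) : |q x - qinf| ≤ D :=
  (hq.abs_sub_limit_le x).trans
    (div_le_self hq.nonneg (one_le_log_exp_one_add (norm_nonneg x)))

lemma le_limit_add (hq : LogHolderWith D qinf q) (x : E) : q x ≤ qinf + D := by
  linarith [(abs_le.1 (hq.abs_sub_limit_le_const x)).2]

lemma abs_sub_le_of_norm_le (hq : LogHolderWith D qinf q) {x y : E} {r : ℝ} (hr : 0 < r)
    (hxy : ‖x - y‖ ≤ r) : |q x - q y| ≤ D / Real.log (Real.exp 1 + 1 / r) := by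
  have hlog := one_le_log_exp_one_add (one_div_pos.2 hr).le
  have hD := hq.nonneg
  rcases eq_or_ne x y with rfl | hne
  · rw [sub_self, abs_zero]
    positivity
  · have hpos : 0 < ‖x - y‖ := norm_sub_pos_iff.2 hne
    refine (hq.abs_sub_le x y).trans ?_
    gcongr

lemma continuous (hq : LogHolderWith D qinf q) : Continuous q := by
  refine Metric.continuous_iff.2 fun x ε hε ↦ ?_
  have hlim := (tendsto_div_log_exp_one_add D).comp tendsto_inv_nhdsGT_zero
  obtain ⟨r, hr, hrpos⟩ := ((hlim.eventually (gt_mem_nhds hε)).and self_mem_nhdsWithin).exists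
  refine ⟨r, hrpos, fun y hy ↦ ?_⟩
  rw [dist_eq_norm] at hy
  have := hq.abs_sub_le_of_norm_le hrpos hy.le
  rw [one_div] at this
  exact this.trans_lt hr

lemma tendsto_cobounded (hq : LogHolderWith D qinf q) : Tendsto q (cobounded E) (𝓝 qinf) :=
  tendsto_iff_norm_sub_tendsto_zero.2 (squeeze_zero (fun _ ↦ norm_nonneg _)
    hq.abs_sub_limit_le ((tendsto_div_log_exp_one_add D).comp tendsto_norm_cobounded_atTop))

lemma le_limit [NormedSpace ℝ E] [Nontrivial E] (hq : LogHolderWith D qinf q) {c : ℝ}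
    (hc : ∀ x, c ≤ q x) : c ≤ qinf :=
  ge_of_tendsto' hq.tendsto_cobounded hc

lemma div_const (hq : LogHolderWith D qinf q) {c : ℝ} (hc : 1 ≤ c) :
    LogHolderWith D (qinf / c) fun x ↦ q x / c := by
  have key (a b : ℝ) : |a / c - b / c| ≤ |a - b| := by
    rw [← sub_div, abs_div, abs_of_nonneg (zero_le_one.trans hc)]
    exact div_le_self (abs_nonneg _) hc
  exact ⟨fun x y ↦ (key _ _).trans (hq.abs_sub_le x y),
    fun x ↦ (key _ _).trans (hq.abs_sub_limit_le x)⟩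

lemma one_div [NormedSpace ℝ E] [Nontrivial E] (hq : LogHolderWith D qinf q) {c : ℝ} (hc : 0 < c)
    (hcq : ∀ x, c ≤ q x) : LogHolderWith (D / c ^ 2) (1 / qinf) fun x ↦ 1 / q x := by
  have key {a b R L : ℝ} (ha : c ≤ a) (hb : c ≤ b) (hab : |a - b| ≤ R / L) :
      |1 / a - 1 / b| ≤ R / c ^ 2 / L := by
    have ha0 : 0 < a := hc.trans_le ha
    have hb0 : 0 < b := hc.trans_le hb
    calc |1 / a - 1 / b| = |a - b| / (a * b) := by
          rw [div_sub_div _ _ ha0.ne' hb0.ne', one_mul, mul_one, abs_div, abs_sub_comm,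
            abs_of_pos (mul_pos ha0 hb0)]
      _ ≤ R / L / c ^ 2 := by
          rw [sq]
          gcongr
          exact (abs_nonneg _).trans hab
      _ = R / c ^ 2 / L := div_right_comm R L (c ^ 2)
  exact ⟨fun x y ↦ key (hcq x) (hcq y) (hq.abs_sub_le x y),
    fun x ↦ key (hcq x) (hq.le_limit hcq) (hq.abs_sub_limit_le x)⟩

end LogHolderWith

namespace IsPLog

variable [MeasurableSpace E] {p : E → ℝ}

lemma pos (hp : IsPLog univ p) (x : E) : 0 < p x := one_pos.trans_le (hp.2.1 x (mem_univ x))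

lemma exists_logHolderWith_one_div (hp : IsPLog univ p) :
    ∃ D pinf, LogHolderWith D (1 / pinf) fun x ↦ 1 / p x := by
  obtain ⟨-, -, C₁, hC₁, C₂, hC₂, pinf, hloc, hdec⟩ := hp
  refine ⟨C₁ + C₂, pinf, fun x y ↦ ?_, fun x ↦ ?_⟩
  · have hlog := one_le_log_exp_one_add (one_div_nonneg.2 (norm_nonneg (x - y)))
    rcases eq_or_ne x y with rfl | hne
    · rw [sub_self, abs_zero]
      positivity
    · refine (hloc x (mem_univ x) y (mem_univ y) hne).trans ?_
      gcongr
      exact le_add_of_nonneg_right hC₂.le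
  · have hlog := one_le_log_exp_one_add (norm_nonneg x)
    refine (hdec x (mem_univ x)).trans ?_
    gcongr
    exact le_add_of_nonneg_left hC₁.le

lemma continuous (hp : IsPLog univ p) : Continuous p := by
  obtain ⟨D, pinf, h⟩ := hp.exists_logHolderWith_one_div
  simpa only [one_div, Pi.inv_def, inv_inv] using
    h.continuous.inv₀ fun x ↦ (one_div_pos.2 (hp.pos x)).ne'

lemma exists_logHolderWith [NormedSpace ℝ E] [Nontrivial E] (hp : IsPLog univ p) {P : ℝ}
    (hP : ∀ x, p x ≤ P) : ∃ D pinf, LogHolderWith D pinf p := by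
  obtain ⟨D, pinf, h⟩ := hp.exists_logHolderWith_one_div
  have := h.one_div (one_div_pos.2 ((hp.pos 0).trans_le (hP 0)))
    fun x ↦ one_div_le_one_div_of_le (hp.pos x) (hP x)
  simp only [one_div_one_div] at this
  exact ⟨_, _, this⟩

end IsPLog

lemma forall_le_of_ae_le {X : Type*} [TopologicalSpace X] [MeasurableSpace X] {μ : Measure X}
    [μ.IsOpenPosMeasure] {f g : X → ℝ} (hf : Continuous f) (hg : Continuous g)
    (hfg : ∀ᵐ x ∂μ, f x ≤ g x) (x : X) : f x ≤ g x :=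
  (isClosed_le hf hg).closure_subset (Measure.dense_of_ae hfg x)

end LogHolder

section VariableExponentMaximal

open Metric Module
open scoped NNReal

lemma le_add_rpow_mul_rpow_one_sub {g a : ℝ≥0∞} {s : ℝ} (hs : 1 ≤ s) (ha : a ≠ 0)
    (ha' : a ≠ ∞) : g ≤ a + g ^ s * a ^ (1 - s) := by
  rcases le_or_gt g a with h | h
  · exact h.trans le_self_add
  refine le_add_left ?_
  rcases eq_or_ne g ∞ with rfl | hg
  · rw [ENNReal.top_rpow_of_pos (by linarith),
      ENNReal.top_mul (ENNReal.rpow_pos (pos_iff_ne_zero.2 ha) ha').ne']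
  · calc g = g ^ s * g ^ (1 - s) := by rw [← ENNReal.rpow_add _ _ (bot_lt_of_lt h).ne' hg]; simp
      _ ≤ g ^ s * a ^ (1 - s) := by
        refine mul_le_mul_right ?_ _
        rw [← neg_sub, ENNReal.rpow_neg, ENNReal.rpow_neg, ENNReal.inv_le_inv]
        exact ENNReal.rpow_le_rpow h.le (by linarith)

lemma rpow_le_exp_of_le_div_pow {a c r D δ : ℝ} {d : ℕ} (ha1 : 1 ≤ a) (hr : 0 < r)
    (ha : a ≤ c / r ^ d) (hδ : |δ| ≤ D / Real.log (Real.exp 1 + 1 / r)) :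
    a ^ δ ≤ Real.exp ((|Real.log c| + d) * D) := by
  have hc : 0 < c := by
    by_contra! h
    linarith [div_nonpos_of_nonpos_of_nonneg h (pow_nonneg hr.le d)]
  set L := Real.log (Real.exp 1 + 1 / r)
  have hL : 1 ≤ L := one_le_log_exp_one_add (one_div_pos.2 hr).le
  have hlog : Real.log a ≤ (|Real.log c| + d) * L := by
    have hr' : -Real.log r ≤ L := by
      rw [← Real.log_inv, ← one_div]
      exact Real.log_le_log (by positivity) (by linarith [Real.exp_pos 1])
    calc Real.log a ≤ Real.log (c / r ^ d) := Real.log_le_log (by linarith) ha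
      _ = Real.log c + d * -Real.log r := by
        rw [Real.log_div hc.ne' (by positivity), Real.log_pow]
        ring
      _ ≤ |Real.log c| * L + d * L := by
        gcongr
        exact (le_abs_self _).trans (le_mul_of_one_le_right (abs_nonneg _) hL)
      _ = (|Real.log c| + d) * L := by ring
  rw [le_div_iff₀ (by linarith)] at hδ
  rw [Real.rpow_def_of_pos (by linarith), Real.exp_le_exp]
  calc Real.log a * δ ≤ Real.log a * |δ| :=
        mul_le_mul_of_nonneg_left (le_abs_self δ) (Real.log_nonneg ha1)
    _ ≤ (|Real.log c| + d) * L * |δ| := by gcongr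
    _ = (|Real.log c| + d) * (|δ| * L) := by ring
    _ ≤ (|Real.log c| + d) * D := by gcongr

lemma setLAverage_le_one_add_mul {X : Type*} [MeasurableSpace X] {μ : Measure X} {B : Set X}
    (hB : MeasurableSet B) {s : X → ℝ} (hs : Measurable s) (hs1 : ∀ y, 1 ≤ s y)
    {g : X → ℝ≥0∞} (hg : Measurable g) {a K : ℝ≥0∞} {σ : ℝ} (ha0 : a ≠ 0) (ha : a ≠ ∞)
    (hK : ∀ y ∈ B, a ^ (σ - s y) ≤ K) (haσ : ⨍⁻ y in B, g y ^ s y ∂μ = a ^ σ) :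
    ⨍⁻ y in B, g y ∂μ ≤ (1 + K) * a := by
  have hpt (y) (hy : y ∈ B) : g y ≤ a + K * a ^ (1 - σ) * g y ^ s y := by
    refine (le_add_rpow_mul_rpow_one_sub (hs1 y) ha0 ha).trans ?_
    rw [mul_comm (g y ^ s y), show 1 - s y = (σ - s y) + (1 - σ) by ring,
      ENNReal.rpow_add _ _ ha0 ha]
    gcongr
    exact hK y hy
  calc ⨍⁻ y in B, g y ∂μ ≤ ⨍⁻ y in B, a + K * a ^ (1 - σ) * g y ^ s y ∂μ := setLAverage_mono hB hpt
    _ ≤ a + K * a ^ (1 - σ) * a ^ σ := by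
      rw [setLAverage_add measurable_const, setLAverage_const_mul (hg.pow hs), haσ]
      gcongr
      exact setLAverage_const_le B a
    _ = (1 + K) * a := by
      rw [mul_assoc, ← ENNReal.rpow_add _ _ ha0 ha, sub_add_cancel, ENNReal.rpow_one]
      ring

variable {E : Type*} [NormedAddCommGroup E] {D qinf : ℝ} {q : E → ℝ}

lemma LogHolderWith.ennreal_rpow_sub_le (hq : LogHolderWith D qinf q) {a : ℝ≥0∞} (ha1 : 1 ≤ a)
    {c r : ℝ} (hc : 0 ≤ c) (hr : 0 < r) {d : ℕ} (ha : a ≤ ENNReal.ofReal (c / r ^ d)) {x y : E}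
    (hxy : ‖x - y‖ ≤ r) :
    a ^ (q x - q y) ≤ ENNReal.ofReal (Real.exp ((|Real.log c| + d) * D)) := by
  have hat : a ≠ ∞ := ne_top_of_le_ne_top ENNReal.ofReal_ne_top ha
  have ha1' : 1 ≤ a.toReal := (ENNReal.toReal_le_toReal ENNReal.one_ne_top hat).2 ha1
  rw [← ENNReal.ofReal_toReal hat, ENNReal.ofReal_rpow_of_pos (one_pos.trans_le ha1')]
  exact ENNReal.ofReal_le_ofReal (rpow_le_exp_of_le_div_pow ha1' hr
    (ENNReal.toReal_le_of_le_ofReal (by positivity) ha) (hq.abs_sub_le_of_norm_le hr hxy))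

variable [NormedSpace ℝ E] [FiniteDimensional ℝ E] [MeasurableSpace E] [BorelSpace E]

lemma setLAverage_ball_le (μ : Measure E) [μ.IsAddHaarMeasure] (f : E → ℝ≥0∞) (x : E) {r : ℝ}
    (hr : 0 < r) : ⨍⁻ y in ball x r, f y ∂μ
      ≤ ENNReal.ofReal ((μ.real (ball 0 1))⁻¹ / r ^ finrank ℝ E) * ∫⁻ y, f y ∂μ := by
  have hpos : 0 < μ.real (ball (0 : E) 1) :=
    ENNReal.toReal_pos (measure_ball_pos μ 0 one_pos).ne' measure_ball_lt_top.ne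
  have hball : (μ (ball x r))⁻¹ = ENNReal.ofReal ((μ.real (ball 0 1))⁻¹ / r ^ finrank ℝ E) := by
    rw [Measure.addHaar_ball_of_pos μ x hr, ← ofReal_measureReal, ← ENNReal.ofReal_mul
      (by positivity), ← ENNReal.ofReal_inv_of_pos (by positivity), mul_inv, mul_comm,
      div_eq_mul_inv]
  rw [setLAverage_eq, ENNReal.div_eq_inv_mul, hball]
  gcongr
  exact Measure.restrict_le_self

-- For `⨍ f ^ q ≥ 1` the mean is compared with `a = (⨍ f ^ q) ^ (1 / q x)`: the bound
-- `a ≤ c / r ^ d` coming from `∫ f ^ q ≤ 1` is what log-Hölder continuity at scale `r` can absorb.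
lemma LogHolderWith.exists_setLAverage_rpow_le (hq : LogHolderWith D qinf q)
    (hq1 : ∀ x, 1 ≤ q x) (μ : Measure E) [μ.IsAddHaarMeasure] :
    ∃ K : ℝ≥0, ∀ f : E → ℝ≥0∞, Measurable f → (∀ y, f y = 0 ∨ 1 ≤ f y) →
      ∫⁻ y, f y ^ q y ∂μ ≤ 1 → ∀ x r, 0 < r →
        (⨍⁻ y in ball x r, f y ∂μ) ^ q x ≤ K * ⨍⁻ y in ball x r, f y ^ q y ∂μ := by
  set c := (μ.real (ball (0 : E) 1))⁻¹
  set d := finrank ℝ E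
  set K : ℝ≥0 := Real.toNNReal (Real.exp ((|Real.log c| + d) * D))
  refine ⟨(1 + K) ^ (qinf + D), fun f hf hf1 hint x r hr ↦ ?_⟩
  have hqx : 0 < q x := one_pos.trans_le (hq1 x)
  have hexp : (1 + K : ℝ≥0∞) ^ q x ≤ ((1 + K) ^ (qinf + D) : ℝ≥0) := by
    rw [ENNReal.coe_rpow_of_nonneg _ (hqx.le.trans (hq.le_limit_add x)), ENNReal.coe_add,
      ENNReal.coe_one]
    exact ENNReal.rpow_le_rpow_of_exponent_le le_self_add (hq.le_limit_add x)
  set A := ⨍⁻ y in ball x r, f y ^ q y ∂μ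
  rcases le_total A 1 with hA1 | hA1
  · have hle (y) (_ : y ∈ ball x r) : f y ≤ f y ^ q y := by
      rcases hf1 y with h | h
      · simp only [h, zero_le]
      · exact ENNReal.le_rpow_self_of_one_le h (hq1 y)
    calc (⨍⁻ y in ball x r, f y ∂μ) ^ q x ≤ A ^ q x :=
          ENNReal.rpow_le_rpow (setLAverage_mono measurableSet_ball hle) hqx.le
      _ ≤ A := ENNReal.rpow_le_self_of_le_one hA1 (hq1 x)
      _ ≤ _ := le_mul_of_one_le_left' ((ENNReal.one_le_rpow le_self_add hqx).trans hexp)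
  · set a := A ^ (q x)⁻¹
    have haA : a ^ q x = A := ENNReal.rpow_inv_rpow hqx.ne' A
    have ha1 : 1 ≤ a := ENNReal.one_le_rpow hA1 (inv_pos.2 hqx)
    have hac : a ≤ ENNReal.ofReal (c / r ^ d) :=
      calc a ≤ A ^ (1 : ℝ) :=
              ENNReal.rpow_le_rpow_of_exponent_le hA1 (inv_le_one_of_one_le₀ (hq1 x))
        _ = A := ENNReal.rpow_one A
        _ ≤ ENNReal.ofReal (c / r ^ d) * 1 := (setLAverage_ball_le μ _ x hr).trans (by gcongr)
        _ = ENNReal.ofReal (c / r ^ d) := mul_one _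
    have hat : a ≠ ∞ := ne_top_of_le_ne_top ENNReal.ofReal_ne_top hac
    have ha0 : a ≠ 0 := (one_pos.trans_le ha1).ne'
    have hK (y) (hy : y ∈ ball x r) : a ^ (q x - q y) ≤ K := by
      rw [mem_ball, dist_comm, dist_eq_norm] at hy
      exact hq.ennreal_rpow_sub_le ha1 (by positivity) hr hac hy.le
    calc (⨍⁻ y in ball x r, f y ∂μ) ^ q x ≤ ((1 + K) * a) ^ q x :=
          ENNReal.rpow_le_rpow (setLAverage_le_one_add_mul measurableSet_ball
            hq.continuous.measurable hq1 hf ha0 hat hK haA.symm) hqx.le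
      _ = (1 + K) ^ q x * A := by rw [ENNReal.mul_rpow_of_nonneg _ _ hqx.le, haA]
      _ ≤ _ := by gcongr

lemma LogHolderWith.exists_maximalFunction_rpow_le (hq : LogHolderWith D qinf q)
    (hq1 : ∀ x, 1 ≤ q x) (μ : Measure E) [μ.IsAddHaarMeasure] :
    ∃ K : ℝ≥0, ∀ f : E → ℝ≥0∞, Measurable f → (∀ y, f y = 0 ∨ 1 ≤ f y) →
      ∫⁻ y, f y ^ q y ∂μ ≤ 1 → ∀ x,
        maximalFunction μ f x ^ q x ≤ K * maximalFunction μ (fun y ↦ f y ^ q y) x := by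
  obtain ⟨K, hK⟩ := hq.exists_setLAverage_rpow_le hq1 μ
  refine ⟨K, fun f hf hf1 hint x ↦ ?_⟩
  have hqx : 0 < q x := one_pos.trans_le (hq1 x)
  rw [← ENNReal.le_rpow_inv_iff hqx, maximalFunction_le_iff]
  intro r hr
  rw [ENNReal.le_rpow_inv_iff hqx]
  refine (hK f hf hf1 hint x r hr).trans ?_
  gcongr
  exact setLAverage_ball_le_maximalFunction _ x hr

lemma LogHolderWith.exists_lintegral_maximalFunction_rpow_le_of_one_le [Nontrivial E]
    (hq : LogHolderWith D qinf q) {qm : ℝ} (hqm : 1 < qm) (hqmq : ∀ x, qm ≤ q x) (μ : Measure E)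
    [μ.IsAddHaarMeasure] :
    ∃ C : ℝ≥0, ∀ f : E → ℝ≥0∞, Measurable f → (∀ y, f y = 0 ∨ 1 ≤ f y) →
      ∫⁻ y, f y ^ q y ∂μ ≤ 1 → ∫⁻ x, maximalFunction μ f x ^ q x ∂μ ≤ C := by
  have hqm0 : 0 < qm := one_pos.trans hqm
  have hs1 (x) : 1 ≤ q x / qm := (one_le_div hqm0).2 (hqmq x)
  have hsq (x) : q x / qm * qm = q x := div_mul_cancel₀ _ hqm0.ne'
  obtain ⟨K, hK⟩ := (hq.div_const hqm.le).exists_maximalFunction_rpow_le hs1 μ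
  obtain ⟨C, hC⟩ := exists_lintegral_maximalFunction_rpow_le μ hqm
  refine ⟨K ^ qm * C, fun f hf hf1 hint ↦ ?_⟩
  have hint' : ∫⁻ y, f y ^ (q y / qm) ∂μ ≤ 1 := by
    refine (lintegral_mono fun y ↦ ?_).trans hint
    rcases hf1 y with h | h
    · simp only [h, ENNReal.zero_rpow_of_pos (one_pos.trans_le (hs1 y)), zero_le]
    · exact ENNReal.rpow_le_rpow_of_exponent_le h
        (div_le_self (hqm0.le.trans (hqmq y)) hqm.le)
  have hfq : Measurable fun y ↦ f y ^ (q y / qm) := hf.pow (hq.continuous.measurable.div_const qm)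
  calc ∫⁻ x, maximalFunction μ f x ^ q x ∂μ
      ≤ ∫⁻ x, (K * maximalFunction μ (fun y ↦ f y ^ (q y / qm)) x) ^ qm ∂μ := by
        refine lintegral_mono fun x ↦ ?_
        rw [← hsq x, ENNReal.rpow_mul]
        exact ENNReal.rpow_le_rpow (hK f hf hf1 hint' x) hqm0.le
    _ = K ^ qm * ∫⁻ x, maximalFunction μ (fun y ↦ f y ^ (q y / qm)) x ^ qm ∂μ := by
        simp only [ENNReal.mul_rpow_of_nonneg _ _ hqm0.le]
        exact lintegral_const_mul' _ _ (ENNReal.rpow_ne_top_of_nonneg hqm0.le ENNReal.coe_ne_top)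
    _ ≤ K ^ qm * (C * ∫⁻ x, (f x ^ (q x / qm)) ^ qm ∂μ) := by
        gcongr
        exact hC _ hfq
    _ ≤ K ^ qm * (C * 1) := by
        simp only [← ENNReal.rpow_mul, hsq]
        gcongr
    _ = (K ^ qm * C : ℝ≥0) := by
        rw [mul_one, ENNReal.coe_mul, ENNReal.coe_rpow_of_nonneg _ hqm0.le]

lemma rpow_le_exp_mul_rpow_add {t u v D R m : ℝ} (ht0 : 0 < t) (ht1 : t ≤ 1) (hu : 1 ≤ u)
    (hR : 0 ≤ R) (hm : 0 ≤ m) (huv : |u - v| ≤ D / Real.log (Real.exp 1 + R)) :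
    t ^ u ≤ Real.exp (m * D) * t ^ v + (Real.exp 1 + R) ^ (-m) := by
  have hb : 0 < Real.exp 1 + R := by positivity
  have hL := one_le_log_exp_one_add hR
  rcases le_or_gt t ((Real.exp 1 + R) ^ (-m)) with h | h
  · calc t ^ u ≤ t := Real.rpow_le_self_of_le_one ht0.le ht1 hu
      _ ≤ _ := h.trans (le_add_of_nonneg_left (by positivity))
  · have hlog : -Real.log t ≤ m * Real.log (Real.exp 1 + R) := by
      have := Real.log_le_log (by positivity) h.le
      rw [Real.log_rpow hb] at this
      linarith
    rw [le_div_iff₀ (by linarith)] at huv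
    have hexp : Real.log t * (u - v) ≤ m * D :=
      calc Real.log t * (u - v) ≤ |Real.log t| * |u - v| := by
            rw [← abs_mul]
            exact le_abs_self _
        _ = -Real.log t * |u - v| := by rw [abs_of_nonpos (Real.log_nonpos ht0.le ht1)]
        _ ≤ m * Real.log (Real.exp 1 + R) * |u - v| := by gcongr
        _ = m * (|u - v| * Real.log (Real.exp 1 + R)) := by ring
        _ ≤ m * D := by gcongr
    calc t ^ u = t ^ (u - v) * t ^ v := by rw [← Real.rpow_add ht0, sub_add_cancel]
      _ ≤ Real.exp (m * D) * t ^ v := by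
        rw [Real.rpow_def_of_pos ht0 (u - v)]
        gcongr
      _ ≤ _ := le_add_of_nonneg_right (by positivity)

lemma ennreal_rpow_le_exp_mul_rpow_add {t : ℝ≥0∞} {u v D R m : ℝ} (ht1 : t ≤ 1) (hu : 1 ≤ u)
    (hR : 0 ≤ R) (hm : 0 ≤ m) (huv : |u - v| ≤ D / Real.log (Real.exp 1 + R)) :
    t ^ u ≤ ENNReal.ofReal (Real.exp (m * D)) * t ^ v
      + ENNReal.ofReal ((Real.exp 1 + R) ^ (-m)) := by
  rcases eq_or_ne t 0 with rfl | ht0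
  · rw [ENNReal.zero_rpow_of_pos (by linarith)]
    exact zero_le
  have htt : t ≠ ∞ := ne_top_of_le_ne_top ENNReal.one_ne_top ht1
  have htpos : 0 < t.toReal := ENNReal.toReal_pos ht0 htt
  have htle : t.toReal ≤ 1 := ENNReal.toReal_le_of_le_ofReal zero_le_one (by simpa using ht1)
  rw [← ENNReal.ofReal_toReal htt, ENNReal.ofReal_rpow_of_pos htpos,
    ENNReal.ofReal_rpow_of_pos htpos, ← ENNReal.ofReal_mul (by positivity),
    ← ENNReal.ofReal_add (by positivity) (by positivity)]
  exact ENNReal.ofReal_le_ofReal (rpow_le_exp_mul_rpow_add htpos htle hu hR hm huv)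

lemma exists_lintegral_rpow_le_mul_add (D : ℝ) (μ : Measure E) [μ.IsAddHaarMeasure] :
    ∃ C : ℝ≥0, ∀ u v : E → ℝ, (∀ x, 1 ≤ u x) →
      (∀ x, |u x - v x| ≤ D / Real.log (Real.exp 1 + ‖x‖)) → ∀ h : E → ℝ≥0∞, (∀ x, h x ≤ 1) →
        ∫⁻ x, h x ^ u x ∂μ ≤ C * ((∫⁻ x, h x ^ v x ∂μ) + 1) := by
  set m : ℝ := finrank ℝ E + 1
  set W := ∫⁻ x : E, ENNReal.ofReal ((Real.exp 1 + ‖x‖) ^ (-m)) ∂μ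
  have hW : W ≠ ∞ := by
    refine ((lintegral_mono fun x ↦ ENNReal.ofReal_le_ofReal ?_).trans_lt
      (finite_integral_one_add_norm (μ := μ) (r := m) (lt_add_one _))).ne
    exact Real.rpow_le_rpow_of_nonpos (by positivity) (by linarith [Real.add_one_le_exp 1])
      (neg_nonpos.2 (by positivity))
  have hWm : Measurable fun x : E ↦ ENNReal.ofReal ((Real.exp 1 + ‖x‖) ^ (-m)) := by fun_prop
  set K := Real.toNNReal (Real.exp (m * D))
  refine ⟨K + W.toNNReal, fun u v hu huv h hh ↦ ?_⟩
  calc ∫⁻ x, h x ^ u x ∂μ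
      ≤ ∫⁻ x, K * h x ^ v x + ENNReal.ofReal ((Real.exp 1 + ‖x‖) ^ (-m)) ∂μ :=
        lintegral_mono fun x ↦
          ennreal_rpow_le_exp_mul_rpow_add (hh x) (hu x) (norm_nonneg x) (by positivity) (huv x)
    _ = K * (∫⁻ x, h x ^ v x ∂μ) + W := by
        rw [lintegral_add_right _ hWm, lintegral_const_mul' _ _ ENNReal.coe_ne_top]
    _ ≤ K * ((∫⁻ x, h x ^ v x ∂μ) + 1) + W * ((∫⁻ x, h x ^ v x ∂μ) + 1) :=
        add_le_add (mul_le_mul_right le_self_add _) (le_mul_of_one_le_right' le_add_self)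
    _ = _ := by rw [ENNReal.coe_add, ENNReal.coe_toNNReal hW, add_mul]

lemma LogHolderWith.exists_lintegral_maximalFunction_rpow_le_of_le_one [Nontrivial E]
    (hq : LogHolderWith D qinf q) {qm : ℝ} (hqm : 1 < qm) (hqmq : ∀ x, qm ≤ q x) (μ : Measure E)
    [μ.IsAddHaarMeasure] :
    ∃ C : ℝ≥0, ∀ f : E → ℝ≥0∞, Measurable f → (∀ y, f y ≤ 1) →
      ∫⁻ y, f y ^ q y ∂μ ≤ 1 → ∫⁻ x, maximalFunction μ f x ^ q x ∂μ ≤ C := by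
  have hqinf : 1 < qinf := hqm.trans_le (hq.le_limit hqmq)
  obtain ⟨K, hK⟩ := exists_lintegral_rpow_le_mul_add D μ
  obtain ⟨C, hC⟩ := exists_lintegral_maximalFunction_rpow_le μ hqinf
  refine ⟨K * (C * (K * (1 + 1)) + 1), fun f hf hf1 hint ↦ ?_⟩
  calc ∫⁻ x, maximalFunction μ f x ^ q x ∂μ
      ≤ K * ((∫⁻ x, maximalFunction μ f x ^ qinf ∂μ) + 1) :=
        hK q (fun _ ↦ qinf) (fun x ↦ hqm.le.trans (hqmq x)) hq.abs_sub_limit_le _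
          (maximalFunction_le_of_le hf1)
    _ ≤ K * (C * (∫⁻ x, f x ^ qinf ∂μ) + 1) := by
        gcongr
        exact hC f hf
    _ ≤ K * (C * (K * ((∫⁻ x, f x ^ q x ∂μ) + 1)) + 1) := by
        gcongr
        exact hK (fun _ ↦ qinf) q (fun _ ↦ hqinf.le)
          (fun x ↦ (abs_sub_comm _ _).trans_le (hq.abs_sub_limit_le x)) f hf1
    _ ≤ (K * (C * (K * (1 + 1)) + 1) : ℝ≥0) := by
        push_cast
        gcongr

theorem LogHolderWith.exists_lintegral_maximalFunction_rpow_le [Nontrivial E]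
    (hq : LogHolderWith D qinf q) {qm : ℝ} (hqm : 1 < qm) (hqmq : ∀ x, qm ≤ q x) (μ : Measure E)
    [μ.IsAddHaarMeasure] :
    ∃ C : ℝ≥0, ∀ f : E → ℝ≥0∞, Measurable f →
      ∫⁻ y, f y ^ q y ∂μ ≤ 1 → ∫⁻ x, maximalFunction μ f x ^ q x ∂μ ≤ C := by
  obtain ⟨C₁, hC₁⟩ := hq.exists_lintegral_maximalFunction_rpow_le_of_one_le hqm hqmq μ
  obtain ⟨C₂, hC₂⟩ := hq.exists_lintegral_maximalFunction_rpow_le_of_le_one hqm hqmq μ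
  have hq0 (x) : 0 ≤ q x := by linarith [hqmq x]
  have hQ : 0 ≤ qinf + D := (hq0 0).trans (hq.le_limit_add 0)
  refine ⟨2 ^ (qinf + D) * (C₁ + C₂), fun f hf hint ↦ ?_⟩
  set S := {y | 1 ≤ f y}
  have hS : MeasurableSet S := measurableSet_le measurable_const hf
  have hlarge (y) : S.indicator f y = 0 ∨ 1 ≤ S.indicator f y := by
    by_cases hy : y ∈ S
    · exact .inr (by rwa [indicator_of_mem hy])
    · exact .inl (indicator_of_notMem hy f)
  have hsmall (y) : Sᶜ.indicator f y ≤ 1 :=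
    indicator_le' (fun y hy ↦ (not_le.1 hy).le) (fun _ _ ↦ zero_le_one) y
  have hmod (T : Set E) : ∫⁻ y, T.indicator f y ^ q y ∂μ ≤ 1 :=
    (lintegral_mono fun y ↦ ENNReal.rpow_le_rpow (indicator_le_self T f y) (hq0 y)).trans hint
  have hpt (x) : maximalFunction μ f x ^ q x ≤ 2 ^ (qinf + D) *
      (maximalFunction μ (S.indicator f) x ^ q x + maximalFunction μ (Sᶜ.indicator f) x ^ q x) := by
    refine (maximalFunction_rpow_le_indicator_add_compl hf hS (hqm.le.trans (hqmq x)) x).trans ?_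
    gcongr
    · exact one_le_two
    · linarith [hq.le_limit_add x]
  calc ∫⁻ x, maximalFunction μ f x ^ q x ∂μ
      ≤ 2 ^ (qinf + D) * ((∫⁻ x, maximalFunction μ (S.indicator f) x ^ q x ∂μ)
          + ∫⁻ x, maximalFunction μ (Sᶜ.indicator f) x ^ q x ∂μ) := by
        rw [← lintegral_add_left ((measurable_maximalFunction _).pow hq.continuous.measurable),
          ← lintegral_const_mul' _ _ (ENNReal.rpow_ne_top_of_nonneg hQ ENNReal.ofNat_ne_top)]
        exact lintegral_mono hpt
    _ ≤ 2 ^ (qinf + D) * (C₁ + C₂) := by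
        gcongr
        · exact hC₁ _ (hf.indicator hS) hlarge (hmod S)
        · exact hC₂ _ (hf.indicator hS.compl) hsmall (hmod Sᶜ)
    _ = (2 ^ (qinf + D) * (C₁ + C₂) : ℝ≥0) := by
        rw [ENNReal.coe_mul, ENNReal.coe_rpow_of_nonneg _ hQ, ENNReal.coe_add, ENNReal.coe_ofNat]

lemma IsPLog.exists_lintegral_maximalFunction_rpow_div_le [Nontrivial E] {p : E → ℝ}
    (hp : IsPLog univ p) (μ : Measure E) [μ.IsAddHaarMeasure] {c pm P : ℝ}
    (hc : 1 ≤ c) (hcpm : c < pm) (hpm : ∀ᵐ x ∂μ, pm ≤ p x) (hP : ∀ᵐ x ∂μ, p x ≤ P) :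
    ∃ K : ℝ≥0, ∀ f : E → ℝ≥0∞, Measurable f → ∫⁻ x, f x ^ (p x / c) ∂μ ≤ 1 →
      ∫⁻ x, maximalFunction μ f x ^ (p x / c) ∂μ ≤ K := by
  have hc0 : 0 < c := one_pos.trans_le hc
  obtain ⟨D, pinf, hpLog⟩ :=
    hp.exists_logHolderWith (forall_le_of_ae_le hp.continuous continuous_const hP)
  exact (hpLog.div_const hc).exists_lintegral_maximalFunction_rpow_le
    ((one_lt_div hc0).2 hcpm) (fun x ↦ div_le_div_of_nonneg_right
      (forall_le_of_ae_le continuous_const hp.continuous hpm x) hc0.le) μ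

end VariableExponentMaximal

section RieszPotential

open Metric Module
open scoped NNReal

lemma setLIntegral_Ioi_rpow {s c : ℝ} (hs : s < -1) (hc : 0 < c) :
    ∫⁻ r in Ioi c, ENNReal.ofReal (r ^ s) = ENNReal.ofReal (c ^ (s + 1) / (-(s + 1))) := by
  rw [← ofReal_integral_eq_lintegral_ofReal (integrableOn_Ioi_rpow_of_lt hs hc),
    integral_Ioi_rpow_of_lt hs hc, neg_div, div_neg]
  filter_upwards [ae_restrict_mem measurableSet_Ioi] with r hr
  exact Real.rpow_nonneg (hc.trans hr).le s

-- The two powers cross at `δ = A ^ (-1 / (β + κ))`, where the integral is split.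
lemma setLIntegral_min_ofReal_rpow_le {β κ A : ℝ} (hβ : 0 < β) (hκ : 0 < κ) (hA : 0 < A) :
    ∫⁻ r in Ioi (0 : ℝ),
        min (ENNReal.ofReal (A * r ^ (β - 1))) (ENNReal.ofReal (r ^ (-1 - κ)))
      ≤ ENNReal.ofReal ((1 / β + 1 / κ) * A ^ (κ / (β + κ))) := by
  set δ := A ^ (-1 / (β + κ))
  have hδ : 0 < δ := by positivity
  have hδκ : δ ^ (-κ) = A ^ (κ / (β + κ)) := by
    rw [← Real.rpow_mul hA.le]
    ring_nf
  have hδβ : A * δ ^ β = A ^ (κ / (β + κ)) := by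
    have hAδ : A = δ ^ (-κ - β) := by
      rw [← Real.rpow_mul hA.le, show -1 / (β + κ) * (-κ - β) = 1 by field_simp; ring,
        Real.rpow_one]
    conv_lhs => rw [hAδ, ← Real.rpow_add hδ, sub_add_cancel, hδκ]
  have hsmall : ∫⁻ r in Ioo 0 δ, ENNReal.ofReal (A * r ^ (β - 1))
      = ENNReal.ofReal (1 / β * A ^ (κ / (β + κ))) := by
    simp only [ENNReal.ofReal_mul hA.le]
    rw [lintegral_const_mul' _ _ ENNReal.ofReal_ne_top,
      setLIntegral_Ioo_rpow (by linarith) hδ.le, ← ENNReal.ofReal_mul hA.le, sub_add_cancel,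
      ← mul_div_assoc, hδβ, one_div_mul_eq_div]
  have hlarge : ∫⁻ r in Ioi δ, ENNReal.ofReal (r ^ (-1 - κ))
      = ENNReal.ofReal (1 / κ * A ^ (κ / (β + κ))) := by
    rw [setLIntegral_Ioi_rpow (by linarith) hδ, show -1 - κ + 1 = -κ by ring, neg_neg, hδκ,
      one_div_mul_eq_div]
  rw [← Ioc_union_Ioi_eq_Ioi hδ.le, add_mul, ENNReal.ofReal_add (by positivity) (by positivity),
    ← hsmall, ← hlarge, setLIntegral_congr Ioo_ae_eq_Ioc]
  exact (lintegral_union_le _ _ _).trans (add_le_add (lintegral_mono fun _ ↦ min_le_left _ _)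
    (lintegral_mono fun _ ↦ min_le_right _ _))

lemma setLIntegral_min_mul_rpow_le {β κ : ℝ} (hβ : 0 < β) (hκ : 0 < κ) (a : ℝ≥0∞) :
    ∫⁻ r in Ioi (0 : ℝ), min (a * ENNReal.ofReal (r ^ (β - 1))) (ENNReal.ofReal (r ^ (-1 - κ)))
      ≤ ENNReal.ofReal (1 / β + 1 / κ) * a ^ (κ / (β + κ)) := by
  rcases eq_or_ne a 0 with rfl | ha0
  · simp only [zero_mul, zero_le, inf_of_le_left, lintegral_zero]
  rcases eq_or_ne a ∞ with rfl | hat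
  · rw [ENNReal.top_rpow_of_pos (by positivity),
      ENNReal.mul_top (ENNReal.ofReal_pos.2 (by positivity)).ne']
    exact le_top
  have hA : 0 < a.toReal := ENNReal.toReal_pos ha0 hat
  rw [← ENNReal.ofReal_toReal hat, ENNReal.ofReal_rpow_of_pos hA,
    ← ENNReal.ofReal_mul (by positivity)]
  simpa only [ENNReal.ofReal_mul hA.le] using setLIntegral_min_ofReal_rpow_le hβ hκ hA

variable {E : Type*} [NormedAddCommGroup E]

lemma enorm_rpow_neg_eq_mul_setLIntegral {s : ℝ} (hs : 0 < s) (z : E) :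
    ‖z‖ₑ ^ (-s) = ENNReal.ofReal s * ∫⁻ r in Ioi ‖z‖, ENNReal.ofReal (r ^ (-s - 1)) := by
  rcases eq_or_ne z 0 with rfl | hz
  · rw [enorm_zero, ENNReal.zero_rpow_of_neg (neg_lt_zero.2 hs), norm_zero,
      lintegral_rpow_eq_top_of_Ioi, ENNReal.mul_top (ENNReal.ofReal_pos.2 hs).ne']
  · have hz0 : 0 < ‖z‖ := norm_pos_iff.2 hz
    rw [setLIntegral_Ioi_rpow (by linarith) hz0, ← ENNReal.ofReal_mul hs.le, ← ofReal_norm,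
      ENNReal.ofReal_rpow_of_pos hz0, sub_add_cancel, neg_neg, mul_div_cancel₀ _ hs.ne']

variable [MeasurableSpace E] [BorelSpace E]

lemma lintegral_enorm_sub_rpow_neg_mul [SecondCountableTopology E] (μ : Measure E) [SFinite μ]
    {s : ℝ} (hs : 0 < s) {f : E → ℝ≥0∞} (hf : Measurable f) (x : E) :
    ∫⁻ y, ‖x - y‖ₑ ^ (-s) * f y ∂μ = ENNReal.ofReal s *
      ∫⁻ r in Ioi (0 : ℝ), ENNReal.ofReal (r ^ (-s - 1)) * ∫⁻ y in ball x r, f y ∂μ := by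
  have hpt (y : E) : ‖x - y‖ₑ ^ (-s) * f y = ENNReal.ofReal s *
      ∫⁻ r in Ioi (0 : ℝ), ENNReal.ofReal (r ^ (-s - 1)) * (ball x r).indicator f y := by
    have hind (r : ℝ) : ENNReal.ofReal (r ^ (-s - 1)) * (ball x r).indicator f y
        = (Ioi ‖x - y‖).indicator (fun r ↦ ENNReal.ofReal (r ^ (-s - 1)) * f y) r := by
      have hmem : y ∈ ball x r ↔ r ∈ Ioi ‖x - y‖ := by
        rw [mem_ball', dist_eq_norm, mem_Ioi]
      by_cases hy : r ∈ Ioi ‖x - y‖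
      · rw [indicator_of_mem hy, indicator_of_mem (hmem.2 hy)]
      · rw [indicator_of_notMem hy, indicator_of_notMem (hmem.not.2 hy), mul_zero]
    simp only [hind]
    rw [setLIntegral_indicator measurableSet_Ioi, Ioi_inter_Ioi, sup_of_le_left (norm_nonneg _),
      lintegral_mul_const _ (by fun_prop), ← mul_assoc, ← enorm_rpow_neg_eq_mul_setLIntegral hs]
  have hmeas : Measurable fun z : E × ℝ ↦
      ENNReal.ofReal (z.2 ^ (-s - 1)) * (ball x z.2).indicator f z.1 := by
    have hind : Measurable ({z : E × ℝ | dist z.1 x < z.2}.indicator fun z ↦ f z.1) :=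
      (hf.comp measurable_fst).indicator (measurableSet_lt (by fun_prop) measurable_snd)
    exact (by fun_prop : Measurable fun z : E × ℝ ↦ ENNReal.ofReal (z.2 ^ (-s - 1))).mul hind
  simp only [hpt]
  rw [lintegral_const_mul' _ _ ENNReal.ofReal_ne_top,
    lintegral_lintegral_swap hmeas.aemeasurable]
  simp only [lintegral_const_mul' _ _ ENNReal.ofReal_ne_top, lintegral_indicator measurableSet_ball]

lemma setLIntegral_le_measure_rpow {X : Type*} [MeasurableSpace X] {μ : Measure X} {q : ℝ}
    (hq : 1 < q) {f : X → ℝ≥0∞} (hf : Measurable f) (hint : ∫⁻ y, f y ^ q ∂μ ≤ 1) (s : Set X) :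
    ∫⁻ y in s, f y ∂μ ≤ μ s ^ (1 - 1 / q) := by
  have hpq := Real.HolderConjugate.conjExponent hq
  have : 0 < q := by linarith
  calc ∫⁻ y in s, f y ∂μ = ∫⁻ y in s, (f * 1) y ∂μ := by rw [mul_one]
    _ ≤ (∫⁻ y in s, f y ^ q ∂μ) ^ (1 / q) *
          (∫⁻ _ in s, 1 ^ q.conjExponent ∂μ) ^ (1 / q.conjExponent) :=
        ENNReal.lintegral_mul_le_Lp_mul_Lq _ hpq hf.aemeasurable aemeasurable_const
    _ ≤ 1 ^ (1 / q) * μ s ^ (1 / q.conjExponent) := by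
        simp only [ENNReal.one_rpow, lintegral_const, Measure.restrict_apply_univ, one_mul]
        refine mul_le_of_le_one_left' (ENNReal.rpow_le_one ?_ (by positivity))
        exact (setLIntegral_le_lintegral _ _).trans hint
    _ = μ s ^ (1 - 1 / q) := by
        rw [ENNReal.one_rpow, one_mul, one_div q.conjExponent, ← hpq.one_sub_inv, one_div]

variable [NormedSpace ℝ E] [FiniteDimensional ℝ E]

lemma addHaar_ball_eq_ofReal_rpow_mul (μ : Measure E) [μ.IsAddHaarMeasure] (x : E) {r : ℝ}
    (hr : 0 < r) : μ (ball x r) = ENNReal.ofReal (r ^ (finrank ℝ E : ℝ)) * μ (ball 0 1) := by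
  rw [Measure.addHaar_ball_of_pos μ x hr, Real.rpow_natCast]

lemma ofReal_rpow_mul_setLIntegral_ball_le_min (μ : Measure E) [μ.IsAddHaarMeasure] {β q : ℝ}
    (hq : 1 < q) {f : E → ℝ≥0∞} (hf : Measurable f) (hint : ∫⁻ y, f y ^ q ∂μ ≤ 1) (x : E) {r : ℝ}
    (hr : 0 < r) :
    ENNReal.ofReal (r ^ (-(finrank ℝ E - β) - 1)) * ∫⁻ y in ball x r, f y ∂μ
      ≤ (μ (ball 0 1) + μ (ball 0 1) ^ (1 - 1 / q)) *
        min (maximalFunction μ f x * ENNReal.ofReal (r ^ (β - 1)))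
          (ENNReal.ofReal (r ^ (-1 - (finrank ℝ E / q - β)))) := by
  set d := (finrank ℝ E : ℝ)
  have hq' : 0 ≤ 1 - 1 / q := sub_nonneg.2 ((div_le_one (by linarith)).2 hq.le)
  rw [mul_min]
  refine le_min ?_ ?_
  · calc ENNReal.ofReal (r ^ (-(d - β) - 1)) * ∫⁻ y in ball x r, f y ∂μ
        ≤ ENNReal.ofReal (r ^ (-(d - β) - 1)) *
            (ENNReal.ofReal (r ^ d) * μ (ball 0 1) * maximalFunction μ f x) := by
          rw [← addHaar_ball_eq_ofReal_rpow_mul μ x hr]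
          exact mul_le_mul_right (setLIntegral_ball_le_mul_maximalFunction f x hr) _
      _ = μ (ball 0 1) * (maximalFunction μ f x * ENNReal.ofReal (r ^ (β - 1))) := by
          rw [show β - 1 = -(d - β) - 1 + d by ring, Real.rpow_add hr,
            ENNReal.ofReal_mul (by positivity)]
          ring
      _ ≤ _ := mul_le_mul_left le_self_add _
  · calc ENNReal.ofReal (r ^ (-(d - β) - 1)) * ∫⁻ y in ball x r, f y ∂μ
        ≤ ENNReal.ofReal (r ^ (-(d - β) - 1)) *
            (ENNReal.ofReal (r ^ d) * μ (ball 0 1)) ^ (1 - 1 / q) := by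
          rw [← addHaar_ball_eq_ofReal_rpow_mul μ x hr]
          exact mul_le_mul_right (setLIntegral_le_measure_rpow hq hf hint _) _
      _ = μ (ball 0 1) ^ (1 - 1 / q) * ENNReal.ofReal (r ^ (-1 - (d / q - β))) := by
          rw [show -1 - (d / q - β) = -(d - β) - 1 + d * (1 - 1 / q) by ring, Real.rpow_add hr,
            Real.rpow_mul hr.le, ENNReal.ofReal_mul (by positivity),
            ENNReal.mul_rpow_of_nonneg _ _ hq', ENNReal.ofReal_rpow_of_pos (by positivity)]
          ring
      _ ≤ _ := mul_le_mul_left le_add_self _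

-- Hedberg's inequality: balls of small radius are controlled by the maximal function, those of
-- large radius by the `L^q` bound.
theorem exists_lintegral_rieszKernel_le (μ : Measure E) [μ.IsAddHaarMeasure] {β q : ℝ}
    (hβ : 0 < β) (hq : 1 < q) (hβq : β * q < finrank ℝ E) :
    ∃ C : ℝ≥0, ∀ f : E → ℝ≥0∞, Measurable f → ∫⁻ y, f y ^ q ∂μ ≤ 1 → ∀ x,
      ∫⁻ y, ‖x - y‖ₑ ^ (-(finrank ℝ E - β)) * f y ∂μ
        ≤ C * maximalFunction μ f x ^ (1 - β * q / finrank ℝ E) := by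
  set d := (finrank ℝ E : ℝ)
  set κ := d / q - β
  set K := μ (ball (0 : E) 1) + μ (ball (0 : E) 1) ^ (1 - 1 / q)
  have hq0 : 0 < q := by linarith
  have hd : 0 < d := (mul_pos hβ hq0).trans hβq
  have hκ : 0 < κ := sub_pos.2 ((lt_div_iff₀ hq0).2 hβq)
  have hs : 0 < d - β := sub_pos.2 ((le_mul_of_one_le_right hβ.le hq.le).trans_lt hβq)
  have hθ : κ / (β + κ) = 1 - β * q / d := by
    rw [add_sub_cancel, sub_div, div_self (by positivity), div_div_eq_mul_div]
  have hK : K ≠ ∞ := ENNReal.add_ne_top.2 ⟨measure_ball_lt_top.ne,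
    ENNReal.rpow_ne_top_of_nonneg (sub_nonneg.2 ((div_le_one hq0).2 hq.le))
      measure_ball_lt_top.ne⟩
  refine ⟨Real.toNNReal (d - β) * K.toNNReal * Real.toNNReal (1 / β + 1 / κ),
    fun f hf hint x ↦ ?_⟩
  calc ∫⁻ y, ‖x - y‖ₑ ^ (-(d - β)) * f y ∂μ
      = ENNReal.ofReal (d - β) * ∫⁻ r in Ioi (0 : ℝ),
          ENNReal.ofReal (r ^ (-(d - β) - 1)) * ∫⁻ y in ball x r, f y ∂μ :=
        lintegral_enorm_sub_rpow_neg_mul μ hs hf x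
    _ ≤ ENNReal.ofReal (d - β) * ∫⁻ r in Ioi (0 : ℝ), K *
          min (maximalFunction μ f x * ENNReal.ofReal (r ^ (β - 1)))
            (ENNReal.ofReal (r ^ (-1 - κ))) :=
        mul_le_mul_right (setLIntegral_mono' measurableSet_Ioi fun _ ↦
          ofReal_rpow_mul_setLIntegral_ball_le_min μ hq hf hint x) _
    _ ≤ ENNReal.ofReal (d - β) * (K *
          (ENNReal.ofReal (1 / β + 1 / κ) * maximalFunction μ f x ^ (κ / (β + κ)))) := by
        rw [lintegral_const_mul' _ _ hK]
        exact mul_le_mul_right (mul_le_mul_right (setLIntegral_min_mul_rpow_le hβ hκ _) _) _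
    _ = _ := by
        rw [hθ, ENNReal.coe_mul, ENNReal.coe_mul, ENNReal.coe_toNNReal hK]
        simp only [ENNReal.ofReal, mul_assoc]

end RieszPotential

section Duhamel

open scoped NNReal

lemma measurable_essSup {X T : Type*} [MeasurableSpace X] [MeasurableSpace T] {ν : Measure T}
    [SFinite ν] {f : X → T → ℝ≥0∞} (hf : Measurable (Function.uncurry f)) :
    Measurable fun x ↦ essSup (f x) ν := by
  refine measurable_of_Ioi fun a ↦ ?_
  have hsec : (fun x ↦ essSup (f x) ν) ⁻¹' Ioi a
      = {x | 0 < ν (Prod.mk x ⁻¹' {z | a < Function.uncurry f z})} := by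
    ext x
    have hle : essSup (f x) ν ≤ a ↔ ∀ᵐ t ∂ν, f x t ≤ a :=
      ⟨fun h ↦ (ENNReal.ae_le_essSup _).mono fun _ ht ↦ ht.trans h, essSup_le_of_ae_le a⟩
    rw [mem_preimage, mem_Ioi, ← not_le, hle, ae_iff, mem_ofPred_eq, pos_iff_ne_zero]
    simp only [not_le]
    rfl
  rw [hsec]
  exact measurableSet_lt measurable_const
    (measurable_measure_prodMk_left (measurableSet_lt measurable_const hf))

lemma setLIntegral_Ioo_comp_sub_le (t : ℝ) (g : ℝ → ℝ≥0∞) :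
    ∫⁻ s in Ioo 0 t, g (t - s) ≤ ∫⁻ τ in Ioi 0, g τ := by
  rw [← lintegral_indicator measurableSet_Ioi, ← lintegral_indicator measurableSet_Ioo,
    ← lintegral_sub_left_eq_self ((Ioi 0).indicator g) t]
  refine lintegral_mono fun s ↦ ?_
  by_cases hs : s ∈ Ioo 0 t
  · rw [indicator_of_mem hs, indicator_of_mem (mem_Ioi.2 (sub_pos.2 hs.2))]
  · rw [indicator_of_notMem hs]
    exact zero_le

variable {n : ℕ} {α : ℝ} {F : ℝ → Rn n → ℝ}

lemma enorm_conv_le (g f : Rn n → ℝ) (x : Rn n) :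
    ‖conv n g f x‖ₑ ≤ ∫⁻ y, ‖g (x - y)‖ₑ * ‖f y‖ₑ :=
  (enorm_integral_le_lintegral_enorm _).trans_eq (by simp only [enorm_mul])

lemma measurable_timeSup (hF : Measurable (Function.uncurry F)) : Measurable (timeSup n F) :=
  measurable_essSup (f := fun x t ↦ ENNReal.ofReal |F t x|)
    (hF.comp measurable_swap).abs.ennreal_ofReal

lemma ae_enorm_le_timeSup (F : ℝ → Rn n → ℝ) (y : Rn n) :
    ∀ᵐ s ∂volume.restrict (Ioi (0 : ℝ)), ‖F s y‖ₑ ≤ timeSup n F y := by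
  simp only [Real.enorm_eq_ofReal_abs]
  exact ENNReal.ae_le_essSup _

lemma setLIntegral_comp_sub_mul_enorm_le {g : ℝ → ℝ≥0∞} (hg : Measurable g) (t : ℝ) (y : Rn n) :
    ∫⁻ s in Ioo 0 t, g (t - s) * ‖F s y‖ₑ ≤ (∫⁻ τ in Ioi 0, g τ) * timeSup n F y :=
  calc ∫⁻ s in Ioo 0 t, g (t - s) * ‖F s y‖ₑ
      ≤ ∫⁻ s in Ioo 0 t, g (t - s) * timeSup n F y := by
        refine lintegral_mono_ae ?_
        filter_upwards [ae_restrict_of_ae_restrict_of_subset Ioo_subset_Ioi_self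
          (ae_enorm_le_timeSup F y)] with s hs
        exact mul_le_mul_right hs _
    _ = (∫⁻ s in Ioo 0 t, g (t - s)) * timeSup n F y := lintegral_mul_const _ (by fun_prop)
    _ ≤ _ := mul_le_mul_left (setLIntegral_Ioo_comp_sub_le t g) _

/-- The common majorant, up to a constant, of the kernels `∂_j 𝔤_τ^α`: its two entries are the
decay in space and the uniform bound by scaling in time. -/
def dKerMajorant (n : ℕ) (α τ : ℝ) (w : Rn n) : ℝ≥0∞ :=
  min (‖w‖ₑ ^ (-(n + 1 : ℝ))) (ENNReal.ofReal (τ ^ (-((n + 1) / (2 * α)))))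

lemma measurable_dKerMajorant :
    Measurable fun z : ℝ × Rn n ↦ dKerMajorant n α z.1 z.2 := by
  unfold dKerMajorant
  fun_prop

lemma exists_enorm_dKer_le (n : ℕ) (hα : 0 < α) (hα1 : α ≤ 1) :
    ∃ C : ℝ≥0, ∀ t > 0, ∀ (j : Fin n) (w : Rn n),
      ‖dKer n α t j w‖ₑ ≤ C * dKerMajorant n α t w := by
  obtain ⟨C, hC, hdKer⟩ := exists_abs_dKer_le n hα hα1
  refine ⟨C.toNNReal, fun t ht j w ↦ ?_⟩
  obtain ⟨hspace, htime⟩ := hdKer t ht j w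
  rw [dKerMajorant, mul_min, Real.enorm_eq_ofReal_abs]
  refine le_min ?_ ((ENNReal.ofReal_le_ofReal htime).trans_eq (ENNReal.ofReal_mul hC.le))
  rcases eq_or_ne w 0 with rfl | hw
  · rw [enorm_zero, ENNReal.zero_rpow_of_neg (neg_lt_zero.2 (by positivity)),
      ENNReal.mul_top (ENNReal.coe_ne_zero.2 (Real.toNNReal_pos.2 hC).ne')]
    exact le_top
  · have hw0 : 0 < ‖w‖ := norm_pos_iff.2 hw
    have hspace' : |dKer n α t j w| ≤ C * ‖w‖ ^ (-(n + 1 : ℝ)) := by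
      rw [Real.rpow_neg hw0.le, ← div_eq_mul_inv, le_div_iff₀ (by positivity), mul_comm]
      exact_mod_cast hspace
    rw [← ofReal_norm, ENNReal.ofReal_rpow_of_pos hw0]
    exact (ENNReal.ofReal_le_ofReal hspace').trans_eq (ENNReal.ofReal_mul hC.le)

lemma exists_lintegral_dKerMajorant_le (hα : 1 / 2 < α) (hαn : 2 * α - 1 < n) :
    ∃ C : ℝ≥0, ∀ w : Rn n,
      ∫⁻ τ in Ioi 0, dKerMajorant n α τ w ≤ C * ‖w‖ₑ ^ (-(n - (2 * α - 1))) := by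
  set κ : ℝ := (n + 1) / (2 * α) - 1 with hκ
  have hκ0 : 0 < κ := sub_pos.2 ((one_lt_div (by linarith)).2 (by linarith))
  have hexp : -(n + 1 : ℝ) * (κ / (1 + κ)) = -(n - (2 * α - 1)) := by
    rw [hκ]
    field_simp
    ring
  refine ⟨Real.toNNReal (1 / 1 + 1 / κ), fun w ↦ ?_⟩
  have hmin := setLIntegral_min_mul_rpow_le one_pos hκ0 (‖w‖ₑ ^ (-(n + 1 : ℝ)))
  rw [← ENNReal.rpow_mul, hexp] at hmin
  simp only [sub_self, Real.rpow_zero, ENNReal.ofReal_one, mul_one,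
    show -1 - κ = -((n + 1) / (2 * α)) by rw [hκ]; ring] at hmin
  exact hmin

/-- The Duhamel term `∑_j ∫_0^t ∂_j 𝔤_{t-s}^α ∗ F(s, ·) ds` of the external force `F`. -/
def duhamel (n : ℕ) (α : ℝ) (F : ℝ → Rn n → ℝ) (t : ℝ) (x : Rn n) : ℝ :=
  ∑ j : Fin n, ∫ s in Ioc (0 : ℝ) t, conv n (dKer n α (t - s) j) (F s) x

lemma exists_enorm_integral_conv_dKer_le (hα : 1 / 2 < α) (hα1 : α ≤ 1) (hαn : 2 * α - 1 < n) :
    ∃ C : ℝ≥0, ∀ F : ℝ → Rn n → ℝ, Measurable (Function.uncurry F) → ∀ (j : Fin n) (t : ℝ) x,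
      ‖∫ s in Ioc (0 : ℝ) t, conv n (dKer n α (t - s) j) (F s) x‖ₑ
        ≤ C * ∫⁻ y, ‖x - y‖ₑ ^ (-(n - (2 * α - 1))) * timeSup n F y := by
  obtain ⟨C₁, hC₁⟩ := exists_enorm_dKer_le n (by linarith : 0 < α) hα1
  obtain ⟨C₂, hC₂⟩ := exists_lintegral_dKerMajorant_le hα hαn
  refine ⟨C₁ * C₂, fun F hF j t x ↦ ?_⟩
  have hconv (s : ℝ) (hs : s ∈ Ioo 0 t) : ‖conv n (dKer n α (t - s) j) (F s) x‖ₑ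
      ≤ C₁ * ∫⁻ y, dKerMajorant n α (t - s) (x - y) * ‖F s y‖ₑ := by
    rw [← lintegral_const_mul' _ _ ENNReal.coe_ne_top]
    refine (enorm_conv_le _ _ x).trans (lintegral_mono fun y ↦ ?_)
    rw [← mul_assoc]
    exact mul_le_mul_left (hC₁ (t - s) (sub_pos.2 hs.2) j (x - y)) _
  have hmeas : Measurable fun z : ℝ × Rn n ↦
      dKerMajorant n α (t - z.1) (x - z.2) * ‖F z.1 z.2‖ₑ :=
    (measurable_dKerMajorant.comp (by fun_prop :
      Measurable fun z : ℝ × Rn n ↦ (t - z.1, x - z.2))).mul hF.enorm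
  calc ‖∫ s in Ioc (0 : ℝ) t, conv n (dKer n α (t - s) j) (F s) x‖ₑ
      ≤ ∫⁻ s in Ioc (0 : ℝ) t, ‖conv n (dKer n α (t - s) j) (F s) x‖ₑ :=
        enorm_integral_le_lintegral_enorm _
    _ = ∫⁻ s in Ioo (0 : ℝ) t, ‖conv n (dKer n α (t - s) j) (F s) x‖ₑ :=
        (setLIntegral_congr Ioo_ae_eq_Ioc).symm
    _ ≤ ∫⁻ s in Ioo (0 : ℝ) t, C₁ * ∫⁻ y, dKerMajorant n α (t - s) (x - y) * ‖F s y‖ₑ :=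
        setLIntegral_mono' measurableSet_Ioo hconv
    _ = C₁ * ∫⁻ y, ∫⁻ s in Ioo (0 : ℝ) t, dKerMajorant n α (t - s) (x - y) * ‖F s y‖ₑ := by
        rw [lintegral_const_mul' _ _ ENNReal.coe_ne_top,
          lintegral_lintegral_swap hmeas.aemeasurable]
    _ ≤ C₁ * ∫⁻ y, C₂ * (‖x - y‖ₑ ^ (-(n - (2 * α - 1))) * timeSup n F y) := by
        refine mul_le_mul_right (lintegral_mono fun y ↦ ?_) _
        rw [← mul_assoc]
        exact (setLIntegral_comp_sub_mul_enorm_le (measurable_dKerMajorant.comp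
          measurable_prodMk_right) t y).trans (mul_le_mul_left (hC₂ (x - y)) _)
    _ = _ := by rw [lintegral_const_mul' _ _ ENNReal.coe_ne_top, ENNReal.coe_mul, mul_assoc]

theorem exists_timeSup_duhamel_le (hα : 1 / 2 < α) (hα1 : α ≤ 1) (hαn : 2 * α - 1 < n) :
    ∃ C : ℝ≥0, ∀ F : ℝ → Rn n → ℝ, Measurable (Function.uncurry F) → ∀ x,
      timeSup n (duhamel n α F) x
        ≤ C * ∫⁻ y, ‖x - y‖ₑ ^ (-(n - (2 * α - 1))) * timeSup n F y := by
  obtain ⟨C, hC⟩ := exists_enorm_integral_conv_dKer_le hα hα1 hαn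
  refine ⟨n * C, fun F hF x ↦ essSup_le_of_ae_le _ (ae_of_all _ fun t ↦ ?_)⟩
  calc ENNReal.ofReal |duhamel n α F t x|
      = ‖duhamel n α F t x‖ₑ := (Real.enorm_eq_ofReal_abs _).symm
    _ ≤ ∑ j : Fin n, ‖∫ s in Ioc (0 : ℝ) t, conv n (dKer n α (t - s) j) (F s) x‖ₑ :=
        enorm_sum_le _ _
    _ ≤ ∑ _j : Fin n, C * ∫⁻ y, ‖x - y‖ₑ ^ (-(n - (2 * α - 1))) * timeSup n F y :=
        Finset.sum_le_sum fun j _ ↦ hC F hF j t x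
    _ = _ := by
        rw [Finset.sum_const, Finset.card_univ, Fintype.card_fin, nsmul_eq_mul, ENNReal.coe_mul,
          ENNReal.coe_natCast, mul_assoc]

end Duhamel

section Luxemburg

open scoped NNReal

variable {Ω : Type*} [MeasurableSpace Ω] {μ : Measure Ω} {p : Ω → ℝ}

lemma lintegral_le_one_of_luxNorm_lt (hp : ∀ x, 0 ≤ p x) {f : Ω → ℝ≥0∞} {L : ℝ≥0∞}
    (hL : luxNorm μ p f < L) : ∫⁻ x, (f x / L) ^ p x ∂μ ≤ 1 := by
  obtain ⟨l, ⟨_, hl⟩, hlL⟩ := sInf_lt_iff.1 hL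
  exact (lintegral_mono fun x ↦ ENNReal.rpow_le_rpow
    (ENNReal.div_le_div_left hlL.le _) (hp x)).trans hl

lemma luxNorm_le_mul_of_lintegral_le (hp : ∀ x, 1 ≤ p x) {f : Ω → ℝ≥0∞} {A : ℝ≥0∞}
    (hA : A ≠ 0) {K : ℝ≥0} (hK : 1 ≤ K) (hint : ∫⁻ x, (f x / A) ^ p x ∂μ ≤ K) :
    luxNorm μ p f ≤ K * A := by
  have hK0 : (K : ℝ≥0∞) ≠ 0 := ENNReal.coe_ne_zero.2 (one_pos.trans_le hK).ne'
  have hpt (x : Ω) : (f x / (K * A)) ^ p x ≤ (K : ℝ≥0∞)⁻¹ * (f x / A) ^ p x := by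
    rw [div_eq_mul_inv, ENNReal.mul_inv (.inl hK0) (.inl ENNReal.coe_ne_top), mul_left_comm,
      ← div_eq_mul_inv, ENNReal.mul_rpow_of_nonneg _ _ (zero_le_one.trans (hp x))]
    refine mul_le_mul_left (ENNReal.rpow_le_self_of_le_one ?_ (hp x)) _
    exact ENNReal.inv_le_one.2 (ENNReal.one_le_coe_iff.2 hK)
  refine sInf_le ⟨ENNReal.mul_pos hK0 hA, ?_⟩
  calc ∫⁻ x, (f x / (K * A)) ^ p x ∂μ
      ≤ (K : ℝ≥0∞)⁻¹ * ∫⁻ x, (f x / A) ^ p x ∂μ :=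
        (lintegral_mono hpt).trans_eq (lintegral_const_mul' _ _ (ENNReal.inv_ne_top.2 hK0))
    _ ≤ (K : ℝ≥0∞)⁻¹ * K := mul_le_mul_right hint _
    _ = 1 := ENNReal.inv_mul_cancel hK0 ENNReal.coe_ne_top

lemma luxNorm_le_of_le_mul_rpow (hp : ∀ x, 1 ≤ p x) {g h : Ω → ℝ≥0∞} {A : ℝ≥0∞} (hA : A ≠ 0)
    {θ : ℝ} (hgh : ∀ x, g x ≤ A * h x ^ θ) {K : ℝ≥0} (hint : ∫⁻ x, h x ^ (θ * p x) ∂μ ≤ K) :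
    luxNorm μ p g ≤ ↑(max 1 K) * A := by
  refine luxNorm_le_mul_of_lintegral_le hp hA (le_max_left _ _) ?_
  calc ∫⁻ x, (g x / A) ^ p x ∂μ ≤ ∫⁻ x, h x ^ (θ * p x) ∂μ := by
        refine lintegral_mono fun x ↦ ?_
        rw [ENNReal.rpow_mul]
        exact ENNReal.rpow_le_rpow (ENNReal.div_le_of_le_mul' (hgh x))
          (zero_le_one.trans (hp x))
    _ ≤ _ := hint.trans (ENNReal.coe_le_coe.2 (le_max_right _ _))

lemma le_mul_of_forall_lt_imp_le_mul {a b : ℝ≥0∞} {c : ℝ≥0} (hc : c ≠ 0)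
    (h : ∀ L, b < L → L ≠ ∞ → a ≤ c * L) : a ≤ c * b := by
  have hc' : (c : ℝ≥0∞) ≠ 0 := ENNReal.coe_ne_zero.2 hc
  rw [← ENNReal.div_le_iff' hc' ENNReal.coe_ne_top]
  refine le_of_forall_gt_imp_ge_of_dense fun L hL ↦ ?_
  rcases eq_or_ne L ∞ with rfl | hLt
  · exact le_top
  · exact ENNReal.div_le_of_le_mul' (h L hL hLt)

end Luxemburg

section MixedEstimate

open scoped NNReal

variable {n : ℕ} {α q : ℝ}

lemma exists_timeSup_duhamel_le_maximalFunction (hα : 1 / 2 < α) (hα1 : α ≤ 1) (hq : 1 < q)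
    (hqn : (2 * α - 1) * q < n) :
    ∃ C : ℝ≥0, C ≠ 0 ∧ ∀ F : ℝ → Rn n → ℝ, Measurable (Function.uncurry F) →
      ∀ L : ℝ≥0∞, L ≠ 0 → L ≠ ∞ → ∫⁻ y, (timeSup n F y / L) ^ q ≤ 1 → ∀ x,
        timeSup n (duhamel n α F) x
          ≤ C * L * maximalFunction volume (fun y ↦ timeSup n F y / L) x
              ^ (1 - (2 * α - 1) * q / n) := by
  have hβ : 0 < 2 * α - 1 := by linarith
  obtain ⟨C₁, hC₁⟩ := exists_timeSup_duhamel_le hα hα1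
    ((le_mul_of_one_le_right hβ.le hq.le).trans_lt hqn)
  obtain ⟨C₂, hC₂⟩ := exists_lintegral_rieszKernel_le (volume : Measure (Rn n)) hβ hq
    (by rwa [finrank_euclideanSpace_fin])
  rw [finrank_euclideanSpace_fin] at hC₂
  refine ⟨C₁ * C₂ + 1, by positivity, fun F hF L hL0 hLt hint x ↦ ?_⟩
  set f : Rn n → ℝ≥0∞ := fun y ↦ timeSup n F y / L
  have hFf (y : Rn n) : timeSup n F y = L * f y := (ENNReal.mul_div_cancel hL0 hLt).symm
  calc timeSup n (duhamel n α F) x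
      ≤ C₁ * ∫⁻ y, ‖x - y‖ₑ ^ (-(n - (2 * α - 1))) * timeSup n F y := hC₁ F hF x
    _ = C₁ * (L * ∫⁻ y, ‖x - y‖ₑ ^ (-(n - (2 * α - 1))) * f y) := by
        simp only [hFf, mul_left_comm _ L, lintegral_const_mul' _ _ hLt]
    _ ≤ C₁ * (L * (C₂ * maximalFunction volume f x ^ (1 - (2 * α - 1) * q / n))) :=
        mul_le_mul_right (mul_le_mul_right
          (hC₂ f ((measurable_timeSup hF).div_const L) hint x) _) _
    _ = ↑(C₁ * C₂) * L * maximalFunction volume f x ^ (1 - (2 * α - 1) * q / n) := by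
        rw [ENNReal.coe_mul]
        ring
    _ ≤ _ := by
        gcongr
        exact le_self_add

lemma exists_luxNorm_timeSup_duhamel_le (hα : 1 / 2 < α) (hα1 : α ≤ 1) (hq : 1 < q)
    (hqn : (2 * α - 1) * q < n) {r : Rn n → ℝ} (hr : ∀ x, 1 ≤ r x) {K : ℝ≥0}
    (hK : ∀ f : Rn n → ℝ≥0∞, Measurable f →
      ∫⁻ x, f x ^ ((1 - (2 * α - 1) * q / n) * r x) ≤ 1 →
      ∫⁻ x, maximalFunction volume f x ^ ((1 - (2 * α - 1) * q / n) * r x) ≤ K) :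
    ∃ C : ℝ≥0, ∀ F : ℝ → Rn n → ℝ, Measurable (Function.uncurry F) →
      luxNorm volume r (timeSup n (duhamel n α F))
        ≤ C * mixedN n (fun x ↦ (1 - (2 * α - 1) * q / n) * r x) q F := by
  obtain ⟨C, hC0, hC⟩ := exists_timeSup_duhamel_le_maximalFunction hα hα1 hq hqn
  have hθ : 0 ≤ 1 - (2 * α - 1) * q / n :=
    sub_nonneg.2 (div_le_one_of_le₀ hqn.le n.cast_nonneg)
  refine ⟨max 1 K * C, fun F hF ↦ le_mul_of_forall_lt_imp_le_mul (by positivity)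
    fun L hL hLt ↦ ?_⟩
  obtain ⟨hLr, hLq⟩ := max_lt_iff.1 hL
  have hL0 : L ≠ 0 := (zero_le.trans_lt hL).ne'
  rw [ENNReal.coe_mul, mul_assoc]
  refine luxNorm_le_of_le_mul_rpow hr (mul_ne_zero (ENNReal.coe_ne_zero.2 hC0) hL0)
    (hC F hF L hL0 hLt (lintegral_le_one_of_luxNorm_lt (fun _ ↦ by linarith) hLq)) ?_
  exact hK _ ((measurable_timeSup hF).div_const L) (lintegral_le_one_of_luxNorm_lt
    (fun x ↦ mul_nonneg hθ (zero_le_one.trans (hr x))) hLr)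

theorem stmt6_general {b : ℝ} (hb : 0 < b) (hα : 1 / 2 < α) (hα1 : α ≤ 1)
    (hnb : (2 * α - 1) * (b + 1) < n * b) {p : Rn n → ℝ} (hplog : IsPLog univ p) {pm P : ℝ}
    (hbpm : b + 1 < pm) (hpm : ∀ᵐ x, pm ≤ p x) (hP : ∀ᵐ x, p x ≤ P) :
    ∃ C > (0 : ℝ), ∀ F : ℝ → Rn n → ℝ, Measurable (Function.uncurry F) →
      mixedN n p (n * b / (2 * α - 1)) (duhamel n α F)
        ≤ ENNReal.ofReal C *
          mixedN n (fun x ↦ p x / (b + 1)) (n * b / ((b + 1) * (2 * α - 1))) F := by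
  have hβ : 0 < 2 * α - 1 := by linarith
  have hn : (0 : ℝ) < n := by nlinarith
  have : Nonempty (Fin n) := ⟨⟨0, Nat.cast_pos.1 hn⟩⟩
  obtain ⟨q, hq⟩ : ∃ q, q = n * b / ((b + 1) * (2 * α - 1)) := ⟨_, rfl⟩
  have hq1 : 1 < q := by rw [hq, one_lt_div (by positivity)]; linarith
  have hθ : 1 - (2 * α - 1) * q / n = 1 / (b + 1) := by rw [hq]; field_simp; ring
  have hqr : 1 / (b + 1) * (n * b / (2 * α - 1)) = q := by rw [hq]; field_simp
  have hqn : (2 * α - 1) * q < n := by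
    rw [← div_lt_one hn, ← sub_pos, hθ]
    positivity
  have hr : 1 ≤ n * b / (2 * α - 1) := by rw [one_le_div hβ]; nlinarith
  obtain ⟨K, hK⟩ := hplog.exists_lintegral_maximalFunction_rpow_div_le volume
    (by linarith : 1 ≤ b + 1) hbpm hpm hP
  obtain ⟨K', hK'⟩ := exists_lintegral_maximalFunction_rpow_le (volume : Measure (Rn n)) hq1
  obtain ⟨C, hC⟩ := exists_luxNorm_timeSup_duhamel_le hα hα1 hq1 hqn
    (fun x ↦ hplog.2.1 x (mem_univ x)) (by simpa only [hθ, one_div_mul_eq_div] using hK)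
  obtain ⟨C', hC'⟩ := exists_luxNorm_timeSup_duhamel_le hα hα1 hq1 hqn (fun _ ↦ hr) (K := K')
    (by simpa only [hθ, hqr] using fun f hf hint ↦ (hK' f hf).trans (mul_le_of_le_one_right' hint))
  simp only [hθ, hqr, one_div_mul_eq_div] at hC hC'
  rw [← hq]
  refine ⟨(C + C' + 1 : ℝ≥0), by positivity, fun F hF ↦ ?_⟩
  rw [ENNReal.ofReal_coe_nnreal]
  have hN : mixedN n (fun _ ↦ q) q F ≤ mixedN n (fun x ↦ p x / (b + 1)) q F :=
    max_le (le_max_right _ _) (le_max_right _ _)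
  refine max_le ((hC F hF).trans ?_) ((hC' F hF).trans ?_)
  · exact mul_le_mul' (ENNReal.coe_le_coe.2 (by rw [add_assoc]; exact le_self_add)) le_rfl
  · exact mul_le_mul' (ENNReal.coe_le_coe.2 (le_add_self.trans le_self_add)) hN

end MixedEstimate

/-- Control of the external force term (γ = 1) in mixed variable Lebesgue spaces. -/
theorem stmt6 (n b : ℕ) (hn : 1 ≤ n) (hb : 1 ≤ b) (α : ℝ) (hα : 1/2 < α ∧ α ≤ 1)
    (h2α : 2 * α - 1 < n) (hnb : (2 * α - 1) * ((b:ℝ) + 1) < (n:ℝ) * b)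
    (p : Rn n → ℝ) (hplog : IsPLog univ p)
    (hpminus : ∃ pm : ℝ, (b:ℝ) + 1 < pm ∧ ∀ᵐ x ∂(volume : Measure (Rn n)), pm ≤ p x)
    (hpplus : ∃ P : ℝ, (∀ᵐ x ∂(volume : Measure (Rn n)), p x ≤ P) ∧
      (2 * α - 1) * P < (n:ℝ) * ((b:ℝ) + 1)) :
    ∃ C > (0:ℝ), ∀ F : ℝ → Rn n → ℝ, Measurable (Function.uncurry F) →
      mixedN n p ((n:ℝ) * b / (2 * α - 1))
        (fun t x => ∑ j : Fin n, ∫ s in Ioc (0:ℝ) t, conv n (dKer n α (t - s) j) (F s) x)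
      ≤ ENNReal.ofReal C
        * mixedN n (fun x => p x / ((b:ℝ) + 1)) ((n:ℝ) * b / (((b:ℝ) + 1) * (2 * α - 1))) F := by
  obtain ⟨⟨pm, hbpm, hpm⟩, P, hP, -⟩ := hpminus, hpplus
  exact stmt6_general (by exact_mod_cast hb) hα.1 hα.2 hnb hplog hbpm hpm hP
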